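/- Let 0 < r1 ≤ r2, let n be an integer with 2 ≤ n ≤ 5, and let Ω be an isoperimetric region in S^1_{r1} × S^1_{r2} × R^n. If θ_m = 0 or σ_m = 0, then I_{S^1_{r1}×R^{n+1}}(V^{n+2}(Ω)) ≤ V^{n+1}(∂Ω). -/

import Mathlib

open MeasureTheory Real ENNReal NNReal

noncomputable section

/-- The flat circle of radius `r` (circumference `2πr`), i.e. `ℝ / (2πr)ℤ`
with the quotient (arc-length) metric. -/
abbrev Circ (r : ℝ) : Type := AddCircle (2 * Real.pi * r)

/-- `d`-dimensional Hausdorff (Riemannian) measure of a subset of a metric space. -/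
noncomputable def haus (X : Type*) [EMetricSpace X] (d : ℕ) (s : Set X) : ℝ≥0∞ :=
  letI : MeasurableSpace X := borel X
  haveI : BorelSpace X := ⟨rfl⟩
  (MeasureTheory.Measure.hausdorffMeasure (d : ℝ) : Measure X) s

/-- A closed region is the closure of an open set. -/
def IsClosedRegion {X : Type*} [TopologicalSpace X] (U : Set X) : Prop :=
  ∃ V : Set X, IsOpen V ∧ U = closure V

/-- The isoperimetric profile of an `m`-dimensional space `X`:
the infimum of the `(m-1)`-dimensional boundary measures of closed regions
of `m`-dimensional measure `v`. -/
noncomputable def isoProfile (X : Type*) [EMetricSpace X] (m : ℕ) (v : ℝ≥0∞) : ℝ≥0∞ :=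
  ⨅ (U : Set X) (_ : IsClosedRegion U ∧ haus X m U = v), haus X (m - 1) (frontier U)

/-- An isoperimetric region in the `m`-dimensional space `X`. -/
def IsIsoRegion (X : Type*) [EMetricSpace X] (m : ℕ) (Ω : Set X) : Prop :=
  IsClosedRegion Ω ∧ haus X (m - 1) (frontier Ω) = isoProfile X m (haus X m Ω)

/-- Euclidean `n`-space. -/
abbrev EucSp (n : ℕ) : Type := EuclideanSpace ℝ (Fin n)

/-- The Riemannian product `S¹_r × ℝ^m` (with the `ℓ²` product metric). -/
abbrev S1R (r : ℝ) (m : ℕ) : Type := WithLp 2 (Circ r × EucSp m)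

/-- The Riemannian product `S¹_{r1} × S¹_{r2} × ℝ^n = T² × ℝ^n`. -/
abbrev T2R (r1 r2 : ℝ) (n : ℕ) : Type := WithLp 2 (Circ r1 × S1R r2 n)

/-- first circle coordinate of a point of `T² × ℝ^n` -/
def t2fst {r1 r2 : ℝ} {n : ℕ} (p : T2R r1 r2 n) : Circ r1 :=
  (WithLp.equiv 2 (Circ r1 × S1R r2 n) p).1

/-- second circle coordinate of a point of `T² × ℝ^n` -/
def t2snd {r1 r2 : ℝ} {n : ℕ} (p : T2R r1 r2 n) : Circ r2 :=
  (WithLp.equiv 2 (Circ r2 × EucSp n) ((WithLp.equiv 2 (Circ r1 × S1R r2 n) p).2)).1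

/-- Euclidean coordinate of a point of `T² × ℝ^n` -/
def t2euc {r1 r2 : ℝ} {n : ℕ} (p : T2R r1 r2 n) : EucSp n :=
  (WithLp.equiv 2 (Circ r2 × EucSp n) ((WithLp.equiv 2 (Circ r1 × S1R r2 n) p).2)).2

/-- `ω_n`, the `n`-dimensional volume of the unit round sphere `Sⁿ ⊂ ℝ^{n+1}`. -/
noncomputable def omegaS (n : ℕ) : ℝ :=
  (haus (EucSp (n+1)) n (Metric.sphere (0 : EucSp (n+1)) 1)).toReal

/-- `β_n(r) = n^{(n-1)(n+1)} (2πr ω_{n-1})^{n+1} (1+n)^{-n²} ω_n^{-n}`. -/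
noncomputable def betaC (n : ℕ) (r : ℝ) : ℝ :=
  (n : ℝ) ^ ((n-1)*(n+1)) * (2 * Real.pi * r * omegaS (n-1)) ^ (n+1) *
    ((1 + (n : ℝ)) ^ (n^2))⁻¹ * ((omegaS n) ^ n)⁻¹

/-- The isoperimetric profile of `ℝ^m`: `I_{ℝ^m}(v) = m^{(m-1)/m} ω_{m-1}^{1/m} v^{(m-1)/m}`. -/
noncomputable def eucProfile (m : ℕ) (v : ℝ) : ℝ :=
  (m : ℝ) ^ (((m : ℝ) - 1)/m) * omegaS (m-1) ^ ((1 : ℝ)/m) * v ^ (((m : ℝ) - 1)/m)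

/-- The region `S¹_{r1} × S¹_{r2} × B^n_R` in `T² × ℝ^n`. -/
def tball (r1 r2 : ℝ) (n : ℕ) (R : ℝ) : Set (T2R r1 r2 n) :=
  {p | ‖t2euc p‖ ≤ R}

/-- `f_n(v) = V^{n+1}(∂(S¹_{r1} × S¹_{r2} × B^n_R))`, where `R > 0` is such that
`V^{n+2}(S¹_{r1} × S¹_{r2} × B^n_R) = v`. -/
noncomputable def fA (r1 r2 : ℝ) (n : ℕ) (v : ℝ≥0∞) : ℝ≥0∞ :=
  ⨅ (R : ℝ) (_ : 0 < R ∧ haus (T2R r1 r2 n) (n+2) (tball r1 r2 n R) = v),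
    haus (T2R r1 r2 n) (n+1) (frontier (tball r1 r2 n R))

/-- The slice function `F₁(t) = V^{n+1}(Ω ∩ ({t} × S¹_{r2} × ℝ^n))`. -/
noncomputable def sliceF1 {r1 r2 : ℝ} {n : ℕ} (Ω : Set (T2R r1 r2 n)) (t : Circ r1) : ℝ≥0∞ :=
  haus (T2R r1 r2 n) (n+1) (Ω ∩ {p | t2fst p = t})

/-- The slice function `F₂(s) = V^{n+1}(Ω ∩ (S¹_{r1} × {s} × ℝ^n))`. -/
noncomputable def sliceF2 {r1 r2 : ℝ} {n : ℕ} (Ω : Set (T2R r1 r2 n)) (s : Circ r2) : ℝ≥0∞ :=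
  haus (T2R r1 r2 n) (n+1) (Ω ∩ {p | t2snd p = s})

/-- `θ_m`, the minimum (infimum) of the slice function `F₁`. -/
noncomputable def thetaMin {r1 r2 : ℝ} {n : ℕ} (Ω : Set (T2R r1 r2 n)) : ℝ≥0∞ :=
  ⨅ t : Circ r1, sliceF1 Ω t

/-- `θ_M`, the maximum (supremum) of the slice function `F₁`. -/
noncomputable def thetaMax {r1 r2 : ℝ} {n : ℕ} (Ω : Set (T2R r1 r2 n)) : ℝ≥0∞ :=
  ⨆ t : Circ r1, sliceF1 Ω t

/-- `σ_m`, the minimum (infimum) of the slice function `F₂`. -/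
noncomputable def sigmaMin {r1 r2 : ℝ} {n : ℕ} (Ω : Set (T2R r1 r2 n)) : ℝ≥0∞ :=
  ⨅ s : Circ r2, sliceF2 Ω s

/-- `σ_M`, the maximum (supremum) of the slice function `F₂`. -/
noncomputable def sigmaMax {r1 r2 : ℝ} {n : ℕ} (Ω : Set (T2R r1 r2 n)) : ℝ≥0∞ :=
  ⨆ s : Circ r2, sliceF2 Ω s

/-- The region `S¹_r × B^m_R` in `S¹_r × ℝ^m`. -/
def s1ball (r : ℝ) (m : ℕ) (R : ℝ) : Set (S1R r m) :=
  {p | ‖(WithLp.equiv 2 (Circ r × EucSp m) p).2‖ ≤ R}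

/-!
Cutting the torus factor of `Ω` open along a slice of measure `ε` turns `Ω` into a region of
`ℝ × S¹_r × ℝⁿ ≅ S¹_r × ℝⁿ⁺¹` of the same volume and with at most `2ε` more boundary, where `r` is
the radius of the circle which is not cut. If that circle is the larger one, it remains to see that
the isoperimetric profile of `S¹_r × ℝᵐ` is monotone in `r`.

For `h < H` and a region of volume `V` over the circle of length `2H`, polarization in reflections
of the circle makes its volume distribution along the circle almost unimodal without increasing the
boundary. A window of length `h / k` folds up the circle of length `2h` by running over it back and
forth `k` times. If the volume of the region over the window is at most `V / 2k`, a dilation of the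
Euclidean factor by a factor at least `1` restores the total volume `V`, and the boundary of the
region over the window is bounded below by its share of the profile. Unimodality guarantees this
for two windows of length `h` around the centre and for windows of length `h / k` elsewhere; they
cover the circle up to an error which vanishes as `k → ∞`.
-/

theorem haus_eq_hausdorffMeasure {X : Type*} [EMetricSpace X] [MeasurableSpace X] [b : BorelSpace X]
    (d : ℕ) (s : Set X) : haus X d s = μH[d] s := by
  obtain rfl := b.measurable_eq
  rfl

theorem frontier_closure_interior_subset {X : Type*} [TopologicalSpace X] (A : Set X) :
    frontier (closure (interior A)) ⊆ frontier A :=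
  frontier_closure_subset.trans frontier_interior_subset

theorem measure_closure_interior {X : Type*} [TopologicalSpace X] [MeasurableSpace X]
    (μ : Measure X) {A : Set X} (hA : μ (frontier A) = 0) : μ (closure (interior A)) = μ A := by
  refine measure_congr (Filter.EventuallyLE.antisymm ?_ ?_) <;>
    refine ae_le_set.2 (measure_mono_null (t := frontier A) ?_ hA)
  · exact fun x hx => ⟨closure_mono interior_subset hx.1, fun h => hx.2 (interior_subset h)⟩
  · exact fun x hx => ⟨subset_closure hx.1, fun h => hx.2 (subset_closure h)⟩

theorem hausdorffMeasure_eq_zero_of_ne_top {X : Type*} [EMetricSpace X] [MeasurableSpace X]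
    [BorelSpace X] {d d' : ℝ} (hd : d < d') {A : Set X} (hA : μH[d] A ≠ ∞) : μH[d'] A = 0 :=
  (Measure.hausdorffMeasure_zero_or_top hd A).resolve_right hA

-- If the boundary of `A` has finite measure, then `A` agrees up to a null set with the closed
-- region `closure (interior A)`.
theorem isoProfile_le_frontier {X : Type*} [EMetricSpace X] [MeasurableSpace X] [BorelSpace X]
    (m : ℕ) (A : Set X) : isoProfile X (m + 1) (μH[(m + 1 : ℕ)] A) ≤ μH[m] (frontier A) := by
  rcases eq_or_ne (μH[m] (frontier A)) ∞ with htop | hfin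
  · exact htop ▸ le_top
  have hnull : μH[(m + 1 : ℕ)] (frontier A) = 0 :=
    hausdorffMeasure_eq_zero_of_ne_top (by exact_mod_cast m.lt_succ_self) hfin
  have hvol : haus X (m + 1) (closure (interior A)) = μH[(m + 1 : ℕ)] A := by
    rw [haus_eq_hausdorffMeasure, measure_closure_interior _ hnull]
  refine (iInf₂_le (closure (interior A)) ⟨⟨_, isOpen_interior, rfl⟩, hvol⟩).trans ?_
  rw [Nat.add_sub_cancel, haus_eq_hausdorffMeasure]
  exact measure_mono (frontier_closure_interior_subset A)

theorem isoProfile_le_frontier_of_isometryEquiv {X X' : Type*} [EMetricSpace X] [EMetricSpace X']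
    [MeasurableSpace X'] [BorelSpace X'] (e : X ≃ᵢ X') (m : ℕ) (A : Set X') :
    isoProfile X (m + 1) (μH[(m + 1 : ℕ)] A) ≤ μH[m] (frontier A) := by
  borelize X
  have h := isoProfile_le_frontier m (e ⁻¹' A)
  have hf : frontier (e ⁻¹' A) = e ⁻¹' frontier A := (e.toHomeomorph.preimage_frontier A).symm
  rwa [hf, e.hausdorffMeasure_preimage, e.hausdorffMeasure_preimage] at h

section BaseMap

variable {B B' Y : Type*}

/-- The map `f × id` of cylinders over the bases `B` and `B'`. -/
def baseMap (f : B → B') (p : WithLp 2 (B × Y)) : WithLp 2 (B' × Y) :=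
  WithLp.toLp 2 (f p.fst, p.snd)

theorem exists_baseMap_eq {f : B → B'} {q : WithLp 2 (B' × Y)} {x : B} (hx : f x = q.fst) :
    ∃ p : WithLp 2 (B × Y), p.fst = x ∧ baseMap f p = q :=
  ⟨WithLp.toLp 2 (x, q.snd), rfl, by rw [baseMap, WithLp.toLp_fst, hx]; rfl⟩

theorem baseMap_image_preimage_inter (f : B → B') (E : Set (WithLp 2 (B' × Y))) (I : Set B) :
    baseMap f '' (baseMap f ⁻¹' E ∩ WithLp.fst ⁻¹' I) = E ∩ WithLp.fst ⁻¹' (f '' I) := by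
  ext q; constructor
  · rintro ⟨p, ⟨hpE, hpI⟩, rfl⟩
    exact ⟨hpE, p.fst, hpI, rfl⟩
  · rintro ⟨hqE, x, hxI, hx⟩
    obtain ⟨p, rfl, rfl⟩ := exists_baseMap_eq hx
    exact ⟨p, ⟨hqE, hxI⟩, rfl⟩

theorem continuous_baseMap [TopologicalSpace B] [TopologicalSpace B'] [TopologicalSpace Y]
    {f : B → B'} (hf : Continuous f) :
    Continuous (baseMap f : WithLp 2 (B × Y) → WithLp 2 (B' × Y)) :=
  (WithLp.prod_continuous_toLp 2 _ _).comp
    ((hf.comp (WithLp.continuous_fst 2 B Y)).prodMk (WithLp.continuous_snd 2 B Y))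

theorem isOpenMap_baseMap [TopologicalSpace B] [TopologicalSpace B'] [TopologicalSpace Y]
    {f : B → B'} (hf : IsOpenMap f) :
    IsOpenMap (baseMap f : WithLp 2 (B × Y) → WithLp 2 (B' × Y)) :=
  (WithLp.homeomorphProd 2 B' Y).symm.isOpenMap.comp
    ((hf.prodMap IsOpenMap.id).comp (WithLp.homeomorphProd 2 B Y).isOpenMap)

theorem edist_baseMap [PseudoEMetricSpace B] [PseudoEMetricSpace B'] [PseudoEMetricSpace Y]
    {f : B → B'} {p q : WithLp 2 (B × Y)} (h : edist (f p.fst) (f q.fst) = edist p.fst q.fst) :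
    edist (baseMap f p) (baseMap f q) = edist p q := by
  rw [WithLp.prod_edist_eq_add (by norm_num), WithLp.prod_edist_eq_add (by norm_num)]
  simp only [baseMap, WithLp.toLp_fst, WithLp.toLp_snd, h]

end BaseMap

section BaseMeasure

variable {B B' Y : Type*} [EMetricSpace B] [EMetricSpace B'] [EMetricSpace Y]
  [MeasurableSpace (WithLp 2 (B × Y))] [BorelSpace (WithLp 2 (B × Y))]
  [MeasurableSpace (WithLp 2 (B' × Y))] [BorelSpace (WithLp 2 (B' × Y))]

theorem hausdorffMeasure_baseMap_preimage_inter {d : ℝ} (hd : 0 ≤ d) {f : B → B'} {I : Set B}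
    (hf : ∀ x ∈ I, ∀ y ∈ I, edist (f x) (f y) = edist x y) (E : Set (WithLp 2 (B' × Y))) :
    μH[d] (baseMap f ⁻¹' E ∩ WithLp.fst ⁻¹' I) = μH[d] (E ∩ WithLp.fst ⁻¹' (f '' I)) := by
  let P : Set (WithLp 2 (B × Y)) := WithLp.fst ⁻¹' I
  have hiso : Isometry fun p : P => (baseMap f p : WithLp 2 (B' × Y)) :=
    fun p q => edist_baseMap (hf _ p.2 _ q.2)
  have himage : (fun p : P => (baseMap f p : WithLp 2 (B' × Y))) ''
      (Subtype.val ⁻¹' (baseMap f ⁻¹' E)) = E ∩ WithLp.fst ⁻¹' (f '' I) := by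
    rw [← baseMap_image_preimage_inter, Set.inter_comm, ← Subtype.image_preimage_coe,
      Set.image_image]
  rw [← himage, hiso.hausdorffMeasure_image (Or.inl hd),
    ← (isometry_subtype_coe (s := P)).hausdorffMeasure_image (Or.inl hd),
    Subtype.image_preimage_coe, Set.inter_comm]

/-- The distribution along the base of the `d`-dimensional measure of a subset `S` of a cylinder
over `B`. -/
def baseMeasure [MeasurableSpace B] (d : ℝ) (S : Set (WithLp 2 (B × Y))) : Measure B :=
  (μH[d].restrict S).map WithLp.fst

variable [MeasurableSpace B] [BorelSpace B] [MeasurableSpace B'] [BorelSpace B']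

theorem measurable_fst_withLp : Measurable (WithLp.fst : WithLp 2 (B × Y) → B) :=
  (WithLp.continuous_fst 2 B Y).measurable

theorem baseMeasure_apply (d : ℝ) (S : Set (WithLp 2 (B × Y))) {I : Set B} (hI : MeasurableSet I) :
    baseMeasure d S I = μH[d] (S ∩ WithLp.fst ⁻¹' I) := by
  rw [baseMeasure, Measure.map_apply measurable_fst_withLp hI,
    Measure.restrict_apply (measurable_fst_withLp hI), Set.inter_comm]

theorem baseMeasure_univ (d : ℝ) (S : Set (WithLp 2 (B × Y))) :
    baseMeasure d S Set.univ = μH[d] S := by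
  rw [baseMeasure_apply d S MeasurableSet.univ, Set.preimage_univ, Set.inter_univ]

theorem baseMeasure_baseMap_preimage {d : ℝ} (hd : 0 ≤ d) {f : B → B'} {I : Set B} {I' : Set B'}
    (hI : MeasurableSet I) (hI' : MeasurableSet I') (hfI : f '' I = I')
    (hf : ∀ x ∈ I, ∀ y ∈ I, edist (f x) (f y) = edist x y) (E : Set (WithLp 2 (B' × Y))) :
    baseMeasure d (baseMap f ⁻¹' E) I = baseMeasure d E I' := by
  rw [baseMeasure_apply d _ hI, baseMeasure_apply d _ hI', ← hfI,
    hausdorffMeasure_baseMap_preimage_inter hd hf]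

end BaseMeasure

section CircleCover

variable {L : ℝ}

theorem edist_coe_addCircle (hL : 0 < L) {s t : ℝ} (h : |s - t| ≤ L / 2) :
    edist (s : AddCircle L) (t : AddCircle L) = edist s t := by
  rw [edist_dist, edist_dist, dist_eq_norm, ← AddCircle.coe_sub, Real.dist_eq,
    (AddCircle.norm_coe_eq_abs_iff L hL.ne').2 (by rwa [abs_of_pos hL])]

variable {Y : Type*}

/-- The preimage of a subset of a cylinder over the circle `ℝ / Lℤ` in the cylinder over `ℝ`. -/
def circleLift (A : Set (WithLp 2 (AddCircle L × Y))) : Set (WithLp 2 (ℝ × Y)) :=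
  baseMap (↑) ⁻¹' A

theorem circleLift_frontier [TopologicalSpace Y] (A : Set (WithLp 2 (AddCircle L × Y))) :
    circleLift (frontier A) = frontier (circleLift A) :=
  (isOpenMap_baseMap QuotientAddGroup.isOpenMap_coe).preimage_frontier_eq_frontier_preimage
    (continuous_baseMap (AddCircle.continuous_mk' L)) A

variable [EMetricSpace Y]
  [MeasurableSpace (WithLp 2 (ℝ × Y))] [BorelSpace (WithLp 2 (ℝ × Y))]
  [MeasurableSpace (WithLp 2 (AddCircle L × Y))] [BorelSpace (WithLp 2 (AddCircle L × Y))]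

theorem baseMeasure_circleLift_of_subset_Icc_half {d : ℝ} (hL : 0 < L) (hd : 0 ≤ d)
    (A : Set (WithLp 2 (AddCircle L × Y))) {I : Set ℝ} (hI : MeasurableSet I)
    (hinj : Set.InjOn ((↑) : ℝ → AddCircle L) I) {s : ℝ} (hs : I ⊆ Set.Icc s (s + L / 2)) :
    baseMeasure d (circleLift A) I = baseMeasure d A ((↑) '' I) :=
  baseMeasure_baseMap_preimage hd hI
    (hI.image_of_continuousOn_injOn (AddCircle.continuous_mk' L).continuousOn hinj) rfl
    (fun x hx y hy => edist_coe_addCircle hL (by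
      rw [abs_le]; constructor <;> linarith [(hs hx).1, (hs hx).2, (hs hy).1, (hs hy).2])) A

theorem baseMeasure_circleLift {d : ℝ} (hL : 0 < L) (hd : 0 ≤ d)
    (A : Set (WithLp 2 (AddCircle L × Y))) {I : Set ℝ} (hI : MeasurableSet I)
    (hinj : Set.InjOn ((↑) : ℝ → AddCircle L) I) {s : ℝ} (hs : I ⊆ Set.Icc s (s + L)) :
    baseMeasure d (circleLift A) I = baseMeasure d A ((↑) '' I) := by
  let H : Set ℝ := Set.Iic (s + L / 2)
  have hH : MeasurableSet H := measurableSet_Iic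
  have hleft : baseMeasure d (circleLift A) (I ∩ H) = baseMeasure d A ((↑) '' (I ∩ H)) :=
    baseMeasure_circleLift_of_subset_Icc_half hL hd A (hI.inter hH)
      (hinj.mono Set.inter_subset_left) fun _ hx => ⟨(hs hx.1).1, hx.2⟩
  have hright : baseMeasure d (circleLift A) (I \ H) = baseMeasure d A ((↑) '' (I \ H)) :=
    baseMeasure_circleLift_of_subset_Icc_half (s := s + L / 2) hL hd A (hI.diff hH)
      (hinj.mono Set.sdiff_subset) fun _ hx =>
        ⟨(not_le.1 hx.2).le, (hs hx.1).2.trans_eq (by ring)⟩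
  have himage : MeasurableSet (((↑) : ℝ → AddCircle L) '' (I ∩ H)) :=
    (hI.inter hH).image_of_continuousOn_injOn (AddCircle.continuous_mk' L).continuousOn
      (hinj.mono Set.inter_subset_left)
  have hinter : (((↑) : ℝ → AddCircle L) '' I) ∩ (↑) '' (I ∩ H) = (↑) '' (I ∩ H) :=
    Set.inter_eq_right.2 (Set.image_mono Set.inter_subset_left)
  have hdiff : (((↑) : ℝ → AddCircle L) '' I) \ (↑) '' (I ∩ H) = (↑) '' (I \ H) := by
    rw [← hinj.image_sdiff_subset Set.inter_subset_left, Set.sdiff_self_inter]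
  rw [← measure_inter_add_sdiff I hH, hleft, hright,
    ← measure_inter_add_sdiff (((↑) : ℝ → AddCircle L) '' I) himage, hinter, hdiff]

theorem baseMeasure_circleLift_Ico {d : ℝ} (hL : 0 < L) (hd : 0 ≤ d)
    (A : Set (WithLp 2 (AddCircle L × Y))) (s : ℝ) :
    baseMeasure d (circleLift A) (Set.Ico s (s + L)) = μH[d] A := by
  have : Fact (0 < L) := ⟨hL⟩
  rw [baseMeasure_circleLift hL hd A measurableSet_Ico
    (fun x hx y hy h => (AddCircle.coe_eq_coe_iff_of_mem_Ico hx hy).1 h) Set.Ico_subset_Icc_self,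
    AddCircle.coe_image_Ico_eq, baseMeasure_univ]

theorem baseMeasure_circleLift_Ioc {d : ℝ} (hL : 0 < L) (hd : 0 ≤ d)
    (A : Set (WithLp 2 (AddCircle L × Y))) (s : ℝ) :
    baseMeasure d (circleLift A) (Set.Ioc s (s + L)) = μH[d] A := by
  have : Fact (0 < L) := ⟨hL⟩
  rw [baseMeasure_circleLift hL hd A measurableSet_Ioc
    (fun x hx y hy h => (AddCircle.coe_eq_coe_iff_of_mem_Ioc hx hy).1 h) Set.Ioc_subset_Icc_self,
    AddCircle.coe_image_Ioc_eq, baseMeasure_univ]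

end CircleCover

section Tile

variable {α : Type*} [LinearOrder α] [TopologicalSpace α] [OrderClosedTopology α]
  [MeasurableSpace α] [OpensMeasurableSpace α]

theorem measure_Ico_add_measure_Ico (μ : Measure α) {a b c : α} (hab : a ≤ b) (hbc : b ≤ c) :
    μ (Set.Ico a b) + μ (Set.Ico b c) = μ (Set.Ico a c) := by
  rw [← Set.Ico_union_Ico_eq_Ico hab hbc,
    measure_union (Set.Ico_disjoint_Ico_same) measurableSet_Ico]

theorem measure_Ioc_add_measure_Ioc (μ : Measure α) {a b c : α} (hab : a ≤ b) (hbc : b ≤ c) :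
    μ (Set.Ioc a b) + μ (Set.Ioc b c) = μ (Set.Ioc a c) := by
  rw [← Set.Ioc_union_Ioc_eq_Ioc hab hbc,
    measure_union (Set.Ioc_disjoint_Ioc_of_le le_rfl) measurableSet_Ioc]

theorem sum_measure_Ico (μ : Measure α) {t : ℕ → α} (ht : Monotone t) (n : ℕ) :
    ∑ j ∈ Finset.range n, μ (Set.Ico (t j) (t (j + 1))) = μ (Set.Ico (t 0) (t n)) := by
  induction n with
  | zero => simp
  | succ n ih =>
    rw [Finset.sum_range_succ, ih, measure_Ico_add_measure_Ico μ (ht n.zero_le) (ht n.le_succ)]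

theorem sum_measure_Ioc (μ : Measure α) {t : ℕ → α} (ht : Monotone t) (n : ℕ) :
    ∑ j ∈ Finset.range n, μ (Set.Ioc (t j) (t (j + 1))) = μ (Set.Ioc (t 0) (t n)) := by
  induction n with
  | zero => simp
  | succ n ih =>
    rw [Finset.sum_range_succ, ih, measure_Ioc_add_measure_Ioc μ (ht n.zero_le) (ht n.le_succ)]

end Tile

section Fold

variable {h : ℝ} {k : ℕ}

/-- The piecewise isometric map of the circle `ℝ / 2hℤ` onto the interval `[x, x + h / k]` which
runs back and forth over that interval `k` times. -/
def fold (h : ℝ) (k : ℕ) (x : ℝ) (z : AddCircle (2 * h)) : ℝ := x + ‖k • z‖ / k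

theorem continuous_fold (h : ℝ) (k : ℕ) (x : ℝ) : Continuous (fold h k x) := by
  unfold fold
  fun_prop

theorem fold_coe (hh : 0 < h) (hk : k ≠ 0) (x : ℝ) (j : ℕ) {u : ℝ} (hu : |u| ≤ h / k) :
    fold h k x ((j * (2 * (h / k)) + u : ℝ) : AddCircle (2 * h)) = x + |u| := by
  have hk' : (0 : ℝ) < k := by positivity
  have hturn : k • ((j * (2 * (h / k)) + u : ℝ) : AddCircle (2 * h)) =
      ((k * u : ℝ) : AddCircle (2 * h)) := by
    rw [← AddCircle.coe_nsmul, nsmul_eq_mul,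
      show (k * (j * (2 * (h / k)) + u) : ℝ) = k * u + j • (2 * h) by
        rw [nsmul_eq_mul]; field_simp; ring,
      AddCircle.coe_add, AddCircle.coe_nsmul, AddCircle.coe_period, smul_zero, add_zero]
  have hnorm : ‖((k * u : ℝ) : AddCircle (2 * h))‖ = k * |u| := by
    rw [(AddCircle.norm_coe_eq_abs_iff _ (by positivity)).2, abs_mul, Nat.abs_cast]
    rw [abs_mul, Nat.abs_cast, abs_of_pos (a := 2 * h) (by positivity),
      mul_div_cancel_left₀ _ two_ne_zero]
    exact (mul_le_mul_of_nonneg_left hu hk'.le).trans_eq (mul_div_cancel₀ _ hk'.ne')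
  rw [fold, hturn, hnorm, mul_div_cancel_left₀ _ hk'.ne']

variable {Y : Type*} [EMetricSpace Y]
  [MeasurableSpace (WithLp 2 (ℝ × Y))] [BorelSpace (WithLp 2 (ℝ × Y))]

theorem baseMeasure_fold_turn {d : ℝ} (hd : 0 ≤ d) (hh : 0 < h) (hk : k ≠ 0) (x : ℝ) (j : ℕ)
    (E : Set (WithLp 2 (ℝ × Y))) :
    baseMeasure d (circleLift (baseMap (fold h k x) ⁻¹' E))
        (Set.Ico (j * (2 * (h / k)) - h / k) (j * (2 * (h / k)) + h / k)) =
      baseMeasure d E (Set.Ico x (x + h / k)) + baseMeasure d E (Set.Ioc x (x + h / k)) := by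
  have hℓ : 0 < h / k := by positivity
  set a : ℝ := j * (2 * (h / k))
  have hup : ∀ t ∈ Set.Ico a (a + h / k), fold h k x t = x - a + t := fun t ht => by
    have := fold_coe hh hk x j (u := t - a) (abs_le.2 ⟨by linarith [ht.1], by linarith [ht.2]⟩)
    rw [add_sub_cancel, abs_of_nonneg (by linarith [ht.1])] at this
    linarith
  have hdown : ∀ t ∈ Set.Ico (a - h / k) a, fold h k x t = x + a - t := fun t ht => by
    have := fold_coe hh hk x j (u := t - a) (abs_le.2 ⟨by linarith [ht.1], by linarith [ht.2]⟩)
    rw [add_sub_cancel, abs_of_nonpos (by linarith [ht.2])] at this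
    linarith
  have himage_up : (fun t : ℝ => fold h k x t) '' Set.Ico a (a + h / k) =
      Set.Ico x (x + h / k) := by
    rw [Set.image_congr hup, Set.image_const_add_Ico]
    congr 1 <;> ring
  have himage_down : (fun t : ℝ => fold h k x t) '' Set.Ico (a - h / k) a =
      Set.Ioc x (x + h / k) := by
    rw [Set.image_congr hdown, Set.image_const_sub_Ico]
    congr 1 <;> ring
  have hE : circleLift (baseMap (fold h k x) ⁻¹' E) =
      baseMap (fun t : ℝ => fold h k x t) ⁻¹' E := rfl
  rw [← measure_Ico_add_measure_Ico _ (b := a) (by linarith) (by linarith), add_comm, hE,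
    baseMeasure_baseMap_preimage hd measurableSet_Ico measurableSet_Ico himage_up,
    baseMeasure_baseMap_preimage hd measurableSet_Ico measurableSet_Ioc himage_down]
  · exact fun s hs t ht => by rw [hdown s hs, hdown t ht, edist_sub_left]
  · exact fun s hs t ht => by rw [hup s hs, hup t ht, edist_add_left]

theorem hausdorffMeasure_fold_preimage [MeasurableSpace (WithLp 2 (AddCircle (2 * h) × Y))]
    [BorelSpace (WithLp 2 (AddCircle (2 * h) × Y))] {d : ℝ} (hd : 0 ≤ d) (hh : 0 < h)
    (hk : k ≠ 0) (x : ℝ) (E : Set (WithLp 2 (ℝ × Y))) :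
    μH[d] (baseMap (fold h k x) ⁻¹' E) =
      k * (baseMeasure d E (Set.Ico x (x + h / k)) + baseMeasure d E (Set.Ioc x (x + h / k))) := by
  let t : ℕ → ℝ := fun j => j * (2 * (h / k)) - h / k
  have ht : Monotone t := fun i j hij => by
    have : (i : ℝ) ≤ j := by exact_mod_cast hij
    simp only [t]
    gcongr
  have hsum := sum_measure_Ico (baseMeasure d (circleLift (baseMap (fold h k x) ⁻¹' E))) ht k
  have hturn (j : ℕ) : t (j + 1) = j * (2 * (h / k)) + h / k := by
    simp only [t]; push_cast; ring
  have hend : t k = t 0 + 2 * h := by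
    simp only [t]; field_simp; push_cast; ring
  rw [hend, baseMeasure_circleLift_Ico (by positivity) hd] at hsum
  rw [← hsum]
  simp only [hturn, t, baseMeasure_fold_turn hd hh hk]
  rw [Finset.sum_const, Finset.card_range, nsmul_eq_mul]

end Fold

section Dilate

variable {Y : Type*} [NormedAddCommGroup Y] [InnerProductSpace ℝ Y]

/-- The dilation by the factor `τ` of the second factor of a cylinder over `ℝ`. -/
def dilate (Y : Type*) [NormedAddCommGroup Y] [InnerProductSpace ℝ Y] (τ : ℝ) :
    WithLp 2 (ℝ × Y) →ₗ[ℝ] WithLp 2 (ℝ × Y) :=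
  (WithLp.linearEquiv 2 ℝ (ℝ × Y)).symm.conj (LinearMap.prodMap LinearMap.id (τ • LinearMap.id))

theorem dilate_apply (τ : ℝ) (p : WithLp 2 (ℝ × Y)) :
    dilate Y τ p = WithLp.toLp 2 (p.fst, τ • p.snd) := rfl

theorem dilate_image_inter (τ : ℝ) (S : Set (WithLp 2 (ℝ × Y))) (I : Set ℝ) :
    dilate Y τ '' S ∩ WithLp.fst ⁻¹' I = dilate Y τ '' (S ∩ WithLp.fst ⁻¹' I) :=
  (Set.image_inter_preimage (dilate Y τ) S (WithLp.fst ⁻¹' I)).symm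

theorem dilate_image_frontier {τ : ℝ} (hτ : τ ≠ 0) (S : Set (WithLp 2 (ℝ × Y))) :
    dilate Y τ '' frontier S = frontier (dilate Y τ '' S) :=
  (((WithLp.homeomorphProd 2 ℝ Y).trans
    ((Homeomorph.refl ℝ).prodCongr (Homeomorph.smulOfNeZero τ hτ))).trans
      (WithLp.homeomorphProd 2 ℝ Y).symm).image_frontier S

theorem lipschitzWith_dilate {τ : ℝ} (hτ : 0 ≤ τ) :
    LipschitzWith (Real.toNNReal (max τ 1)) (dilate Y τ) := by
  refine LipschitzWith.of_dist_le_mul fun p q => ?_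
  rw [dist_eq_norm, dist_eq_norm, ← map_sub, Real.coe_toNNReal _ (hτ.trans (le_max_left _ _))]
  generalize p - q = v
  refine (abs_le_of_sq_le_sq' ?_ (by positivity)).2
  rw [mul_pow, WithLp.prod_norm_sq_eq_of_L2, WithLp.prod_norm_sq_eq_of_L2, dilate_apply, mul_add]
  simp only [WithLp.toLp_fst, WithLp.toLp_snd, norm_smul, mul_pow, Real.norm_eq_abs, sq_abs]
  gcongr
  · exact le_mul_of_one_le_left (sq_nonneg _) (one_le_pow₀ (le_max_right _ _))
  · exact le_max_left _ _

theorem finrank_withLp_prod [FiniteDimensional ℝ Y] :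
    Module.finrank ℝ (WithLp 2 (ℝ × Y)) = Module.finrank ℝ Y + 1 := by
  rw [(WithLp.linearEquiv 2 ℝ (ℝ × Y)).finrank_eq, Module.finrank_prod, Module.finrank_self,
    add_comm]

variable [MeasurableSpace (WithLp 2 (ℝ × Y))] [BorelSpace (WithLp 2 (ℝ × Y))] {m : ℕ}

theorem baseMeasure_dilate_image_le {τ : ℝ} (hτ : 0 ≤ τ) (S : Set (WithLp 2 (ℝ × Y)))
    {I : Set ℝ} (hI : MeasurableSet I) :
    baseMeasure m (dilate Y τ '' S) I ≤ ENNReal.ofReal (max (τ ^ m) 1) * baseMeasure m S I := by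
  rw [baseMeasure_apply _ _ hI, baseMeasure_apply _ _ hI, dilate_image_inter]
  refine ((lipschitzWith_dilate hτ).hausdorffMeasure_image_le (Nat.cast_nonneg m) _).trans_eq ?_
  rw [ENNReal.rpow_natCast, ← ENNReal.ofReal, ← ENNReal.ofReal_pow (by positivity)]
  congr 2
  rcases le_total τ 1 with h | h
  · rw [max_eq_right h, max_eq_right (pow_le_one₀ hτ h), one_pow]
  · rw [max_eq_left h, max_eq_left (one_le_pow₀ h)]

variable [FiniteDimensional ℝ Y]

theorem hausdorffMeasure_dilate_image (hY : Module.finrank ℝ Y = m) {τ : ℝ} (hτ : 0 ≤ τ)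
    (S : Set (WithLp 2 (ℝ × Y))) :
    μH[(m + 1 : ℕ)] (dilate Y τ '' S) = ENNReal.ofReal (τ ^ m) * μH[(m + 1 : ℕ)] S := by
  have hdet : LinearMap.det (dilate Y τ) = τ ^ m := by
    rw [dilate, LinearEquiv.conj_apply, LinearMap.comp_assoc, LinearMap.det_conj,
      LinearMap.det_prodMap, LinearMap.det_id, one_mul, LinearMap.det_smul, LinearMap.det_id,
      mul_one, hY]
  have h := Measure.addHaar_image_linearMap
    (μH[(Module.finrank ℝ (WithLp 2 (ℝ × Y)) : ℕ)] : Measure (WithLp 2 (ℝ × Y))) (dilate Y τ) S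
  rwa [hdet, abs_of_nonneg (by positivity), finrank_withLp_prod, hY] at h

theorem baseMeasure_dilate_image (hY : Module.finrank ℝ Y = m) {τ : ℝ} (hτ : 0 ≤ τ)
    (S : Set (WithLp 2 (ℝ × Y))) {I : Set ℝ} (hI : MeasurableSet I) :
    baseMeasure (m + 1 : ℕ) (dilate Y τ '' S) I =
      ENNReal.ofReal (τ ^ m) * baseMeasure (m + 1 : ℕ) S I := by
  rw [baseMeasure_apply _ _ hI, baseMeasure_apply _ _ hI, dilate_image_inter,
    hausdorffMeasure_dilate_image hY hτ]

end Dilate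

section Window

variable {Y : Type*} [NormedAddCommGroup Y] [InnerProductSpace ℝ Y] [FiniteDimensional ℝ Y]
  [MeasurableSpace (WithLp 2 (ℝ × Y))] [BorelSpace (WithLp 2 (ℝ × Y))] {m : ℕ}

theorem hausdorffMeasure_fst_preimage_singleton (hY : Module.finrank ℝ Y = m) (s : ℝ) :
    μH[(m + 1 : ℕ)] (WithLp.fst ⁻¹' {s} : Set (WithLp 2 (ℝ × Y))) = 0 := by
  borelize Y
  have hiso : Isometry fun y : Y => (WithLp.toLp 2 (s, y) : WithLp 2 (ℝ × Y)) := fun y y' => by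
    rw [WithLp.prod_edist_eq_add (by norm_num), WithLp.toLp_fst, WithLp.toLp_fst, edist_self,
      ENNReal.zero_rpow_of_pos (by norm_num), zero_add, ← ENNReal.rpow_mul]
    norm_num
  have hrange : (WithLp.fst ⁻¹' {s} : Set (WithLp 2 (ℝ × Y))) ⊆
      (fun y : Y => WithLp.toLp 2 (s, y)) '' Set.univ := by
    rintro p rfl
    exact ⟨p.snd, trivial, rfl⟩
  refine measure_mono_null hrange ?_
  rw [hiso.hausdorffMeasure_image (Or.inl (by positivity))]
  simpa using hausdorffMeasure_of_dimH_lt (s := (Set.univ : Set Y)) (d := ((m + 1 : ℕ) : ℝ≥0)) (by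
    rw [Real.dimH_univ_eq_finrank, hY]
    exact_mod_cast m.lt_succ_self)

theorem nullSingletonClass_baseMeasure (hY : Module.finrank ℝ Y = m)
    (S : Set (WithLp 2 (ℝ × Y))) : NullSingletonClass (baseMeasure (m + 1 : ℕ) S) :=
  ⟨fun s => by
    rw [baseMeasure_apply _ _ (measurableSet_singleton s)]
    exact measure_mono_null Set.inter_subset_right (hausdorffMeasure_fst_preimage_singleton hY s)⟩

variable {h : ℝ} {k : ℕ} [MeasurableSpace (WithLp 2 (AddCircle (2 * h) × Y))]
  [BorelSpace (WithLp 2 (AddCircle (2 * h) × Y))]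

theorem le_of_fold (hY : Module.finrank ℝ Y = m) (hm : m ≠ 0) (hh : 0 < h) (hk : k ≠ 0) {V : ℝ}
    (hV : 0 < V) {J : ℝ≥0∞}
    (hJ : ∀ S : Set (WithLp 2 (AddCircle (2 * h) × Y)),
      μH[(m + 1 : ℕ)] S = ENNReal.ofReal V → J ≤ μH[m] (frontier S))
    (E : Set (WithLp 2 (ℝ × Y))) (x : ℝ) {w : ℝ} (hw : 0 < w)
    (hE : baseMeasure (m + 1 : ℕ) E (Set.Ico x (x + h / k)) = ENNReal.ofReal w) :
    J ≤ ENNReal.ofReal (max (V / (2 * k * w)) 1) * (k *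
      (baseMeasure m (frontier E) (Set.Ico x (x + h / k)) +
        baseMeasure m (frontier E) (Set.Ioc x (x + h / k)))) := by
  obtain ⟨τ, hτ, hτm⟩ : ∃ τ : ℝ, 0 < τ ∧ τ ^ m = V / (2 * k * w) :=
    ⟨(V / (2 * k * w)) ^ ((m : ℝ)⁻¹), by positivity, Real.rpow_inv_natCast_pow (by positivity) hm⟩
  have := nullSingletonClass_baseMeasure hY E
  have hvolume : μH[(m + 1 : ℕ)] (baseMap (fold h k x) ⁻¹' (dilate Y τ '' E)) =
      ENNReal.ofReal V := by
    rw [hausdorffMeasure_fold_preimage (by positivity) hh hk,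
      baseMeasure_dilate_image hY hτ.le _ measurableSet_Ico,
      baseMeasure_dilate_image hY hτ.le _ measurableSet_Ioc, ← measure_congr Ico_ae_eq_Ioc, hE, hτm,
      ← ENNReal.ofReal_natCast, ← ENNReal.ofReal_mul (by positivity),
      ← ENNReal.ofReal_add (by positivity) (by positivity), ← ENNReal.ofReal_mul (by positivity)]
    congr 1
    field_simp
    ring
  refine (hJ _ hvolume).trans ((measure_mono
    ((continuous_baseMap (continuous_fold h k x)).frontier_preimage_subset _)).trans ?_)
  rw [hausdorffMeasure_fold_preimage (by positivity) hh hk, ← dilate_image_frontier hτ.ne', ← hτm,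
    mul_left_comm, mul_add (ENNReal.ofReal _)]
  gcongr <;> exact baseMeasure_dilate_image_le hτ.le _ (by measurability)

theorem two_mul_mul_min_le (hY : Module.finrank ℝ Y = m) (hm : m ≠ 0) (hh : 0 < h) (hk : k ≠ 0)
    {V : ℝ} (hV : 0 < V) {J : ℝ≥0∞}
    (hJ : ∀ S : Set (WithLp 2 (AddCircle (2 * h) × Y)),
      μH[(m + 1 : ℕ)] S = ENNReal.ofReal V → J ≤ μH[m] (frontier S))
    (E : Set (WithLp 2 (ℝ × Y))) (x : ℝ)
    (hE : baseMeasure (m + 1 : ℕ) E (Set.Ico x (x + h / k)) ≠ ∞) :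
    2 * J * min (baseMeasure (m + 1 : ℕ) E (Set.Ico x (x + h / k))) (ENNReal.ofReal (V / (2 * k))) ≤
      ENNReal.ofReal V * (baseMeasure m (frontier E) (Set.Ico x (x + h / k)) +
        baseMeasure m (frontier E) (Set.Ioc x (x + h / k))) := by
  obtain hzero | hpos := eq_zero_or_pos (baseMeasure (m + 1 : ℕ) E (Set.Ico x (x + h / k)))
  · rw [hzero, min_eq_left zero_le, mul_zero]
    exact zero_le
  obtain ⟨w, hw, hEw⟩ : ∃ w : ℝ, 0 < w ∧
      baseMeasure (m + 1 : ℕ) E (Set.Ico x (x + h / k)) = ENNReal.ofReal w :=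
    ⟨_, ENNReal.toReal_pos hpos.ne' hE, (ENNReal.ofReal_toReal hE).symm⟩
  have hcancel : max (V / (2 * k * w)) 1 * k * (2 * min w (V / (2 * k))) = V := by
    rcases le_total w (V / (2 * k)) with hle | hle
    · rw [min_eq_left hle, max_eq_left]
      · field_simp
      · rw [le_div_iff₀ (by positivity)] at hle ⊢; linarith
    · rw [min_eq_right hle, max_eq_right]
      · field_simp
      · rw [div_le_iff₀ (by positivity)] at hle ⊢; linarith
  have hfold := le_of_fold hY hm hh hk hV hJ E x hw hEw
  rw [hEw, ← ENNReal.ofReal_min]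
  set P := baseMeasure m (frontier E) (Set.Ico x (x + h / k)) +
    baseMeasure m (frontier E) (Set.Ioc x (x + h / k))
  calc 2 * J * ENNReal.ofReal (min w (V / (2 * k)))
      = J * ENNReal.ofReal (2 * min w (V / (2 * k))) := by
        rw [ENNReal.ofReal_mul zero_le_two, ENNReal.ofReal_ofNat]; ring
    _ ≤ ENNReal.ofReal (max (V / (2 * k * w)) 1) * (k * P) *
          ENNReal.ofReal (2 * min w (V / (2 * k))) := mul_le_mul_left hfold _
    _ = ENNReal.ofReal (max (V / (2 * k * w)) 1 * k * (2 * min w (V / (2 * k)))) * P := by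
        rw [ENNReal.ofReal_mul (p := _ * _) (by positivity),
          ENNReal.ofReal_mul (p := max _ _) (by positivity), ENNReal.ofReal_natCast]
        ring
    _ = ENNReal.ofReal V * P := by rw [hcancel]

end Window

section Frontier

variable {X : Type*} [TopologicalSpace X]

theorem frontier_inter_congr {A B G : Set X} (hG : IsOpen G) (h : A ∩ G = B ∩ G) :
    frontier A ∩ G = frontier B ∩ G := by
  rw [← frontier_inter_open_inter hG, h, frontier_inter_open_inter hG]

theorem measure_frontier_inter_add_union_le [MeasurableSpace X] [OpensMeasurableSpace X]
    (ν : Measure X) (A B : Set X) {G : Set X} (hG : MeasurableSet G) :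
    ν (frontier (A ∩ B) ∩ G) + ν (frontier (A ∪ B) ∩ G) ≤
      ν (frontier A ∩ G) + ν (frontier B ∩ G) := by
  have hmeas (C : Set X) : MeasurableSet (frontier C ∩ G) :=
    isClosed_frontier.measurableSet.inter hG
  have hinter : frontier (A ∩ B) ⊆ frontier A ∪ frontier B := (frontier_inter_subset A B).trans
    (Set.union_subset_union Set.inter_subset_left Set.inter_subset_right)
  have hunion : frontier (A ∪ B) ⊆ frontier A ∪ frontier B := (frontier_union_subset A B).trans
    (Set.union_subset_union Set.inter_subset_left Set.inter_subset_right)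
  rw [← measure_union_add_inter _ (hmeas (A ∪ B)), ← measure_union_add_inter _ (hmeas B)]
  gcongr ν ?_ + ν ?_
  · rw [← Set.union_inter_distrib_right, ← Set.union_inter_distrib_right]
    exact Set.inter_subset_inter_left _ (Set.union_subset hinter hunion)
  · rintro x ⟨⟨⟨hx, -⟩, hxG⟩, ⟨⟨-, hx'⟩, -⟩⟩
    exact ⟨⟨⟨closure_mono Set.inter_subset_left hx,
      fun h => hx' (interior_mono Set.subset_union_left h)⟩, hxG⟩,
      ⟨⟨closure_mono Set.inter_subset_right hx,
      fun h => hx' (interior_mono Set.subset_union_right h)⟩, hxG⟩⟩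

end Frontier

theorem measure_inter_lt_add_inter_gt_add_inter_eq {X : Type*} [MeasurableSpace X] (μ : Measure X)
    {A : Set X} (hA : MeasurableSet A) {f g : X → ℝ} (hf : Measurable f) (hg : Measurable g) :
    μ (A ∩ {x | f x < g x}) + μ (A ∩ {x | g x < f x}) + μ (A ∩ {x | g x = f x}) = μ A := by
  have hlt : Disjoint {x | f x < g x} {x | g x < f x} :=
    Set.disjoint_left.2 fun x (h : f x < g x) (h' : g x < f x) => lt_asymm h h'
  have heq : Disjoint ({x | f x < g x} ∪ {x | g x < f x}) {x | g x = f x} :=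
    Set.disjoint_left.2 fun x hx (h : g x = f x) =>
      hx.elim (fun hx : f x < g x => hx.ne' h) fun hx : g x < f x => hx.ne h
  have huniv : {x | f x < g x} ∪ {x | g x < f x} ∪ {x | g x = f x} = Set.univ :=
    Set.eq_univ_of_forall fun x => by
      rcases lt_trichotomy (f x) (g x) with h | h | h
      exacts [Or.inl (Or.inl h), Or.inr h.symm, Or.inl (Or.inr h)]
  rw [← measure_union (hlt.mono Set.inter_subset_right Set.inter_subset_right)
      (hA.inter (measurableSet_lt hg hf)), ← Set.inter_union_distrib_left,
    ← measure_union (heq.mono Set.inter_subset_right Set.inter_subset_right)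
      (hA.inter (measurableSet_eq_fun hg hf)), ← Set.inter_union_distrib_left, huniv,
    Set.inter_univ]

section Polarization

variable {X : Type*} {σ : X → X} {w : X → ℝ} {E : Set X}

/-- The polarization (two-point rearrangement) of `E` with respect to the involution `σ`: of each
pair `{x, σ x}` meeting `E` in one point, it contains the point at which `w` is larger. -/
def polarize (σ : X → X) (w : X → ℝ) (E : Set X) : Set X :=
  {x | (x ∈ E ∧ σ x ∈ E) ∨ w (σ x) ≤ w x ∧ (x ∈ E ∨ σ x ∈ E)}

/-- The part of `E` which polarization replaces by its image under `σ`. -/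
def movedPart (σ : X → X) (w : X → ℝ) (E : Set X) : Set X :=
  {x | x ∈ E ∧ σ x ∉ E ∧ w x < w (σ x)}

theorem movedPart_subset : movedPart σ w E ⊆ E := fun _ hx => hx.1

theorem polarize_eq (hσ : Function.Involutive σ) (hfix : ∀ x, w (σ x) = w x → σ x = x) :
    polarize σ w E = E \ movedPart σ w E ∪ σ ⁻¹' movedPart σ w E := by
  ext x
  have := hfix x
  simp only [polarize, movedPart, Set.mem_ofPred_eq, Set.mem_union, Set.mem_sdiff, Set.mem_preimage,
    hσ x]
  clear hfix hσ
  grind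

theorem disjoint_preimage_movedPart (hσ : Function.Involutive σ) :
    Disjoint (E \ movedPart σ w E) (σ ⁻¹' movedPart σ w E) :=
  Set.disjoint_left.2 fun x hx hx' => hx'.2.1 (by rw [hσ x]; exact hx.1)

theorem polarize_inter_gt : polarize σ w E ∩ {x | w x < w (σ x)} =
    (E ∩ σ ⁻¹' E) ∩ {x | w x < w (σ x)} := by
  ext x
  simp only [polarize, Set.mem_inter_iff, Set.mem_ofPred_eq, Set.mem_preimage]
  grind

theorem polarize_inter_lt : polarize σ w E ∩ {x | w (σ x) < w x} =
    (E ∪ σ ⁻¹' E) ∩ {x | w (σ x) < w x} := by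
  ext x
  simp only [polarize, Set.mem_inter_iff, Set.mem_union, Set.mem_ofPred_eq, Set.mem_preimage]
  grind

section Measure

variable [MeasurableSpace X] {μ : Measure X}

theorem measurableSet_movedPart (hσ : Measurable σ) (hw : Measurable w) (hE : MeasurableSet E) :
    MeasurableSet (movedPart σ w E) :=
  hE.inter ((hσ hE).compl.inter (measurableSet_lt hw (hw.comp hσ)))

theorem measurableSet_polarize (hσ : Measurable σ) (hw : Measurable w) (hE : MeasurableSet E) :
    MeasurableSet (polarize σ w E) :=
  (hE.inter (hσ hE)).union ((measurableSet_le (hw.comp hσ) hw).inter (hE.union (hσ hE)))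

theorem measure_polarize (hσ : Function.Involutive σ) (hμ : MeasurePreserving σ μ μ)
    (hw : Measurable w) (hfix : ∀ x, w (σ x) = w x → σ x = x) (hE : MeasurableSet E) :
    μ (polarize σ w E) = μ E := by
  have hmoved := measurableSet_movedPart hμ.measurable hw hE
  rw [polarize_eq hσ hfix, measure_union (disjoint_preimage_movedPart hσ) (hμ.measurable hmoved),
    hμ.measure_preimage hmoved.nullMeasurableSet,
    measure_sdiff_add_inter E hmoved |>.symm, Set.inter_eq_right.2 movedPart_subset]

theorem setLIntegral_add_le_setLIntegral_polarize (hσ : Function.Involutive σ)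
    (hμ : MeasurePreserving σ μ μ) (hw : Measurable w) (hw0 : ∀ x, 0 ≤ w x)
    (hfix : ∀ x, w (σ x) = w x → σ x = x) (hE : MeasurableSet E) {β : ℝ} (hβ : 0 < β) :
    ∫⁻ x in E, ENNReal.ofReal (w x) ∂μ +
        ENNReal.ofReal β * μ (movedPart σ w E ∩ {x | w x + β ≤ w (σ x)}) ≤
      ∫⁻ x in polarize σ w E, ENNReal.ofReal (w x) ∂μ := by
  set D := movedPart σ w E
  set A : Set X := {x | w x + β ≤ w (σ x)}
  have hwσ : Measurable fun x => w (σ x) := hw.comp hμ.measurable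
  have hD : MeasurableSet D := measurableSet_movedPart hμ.measurable hw hE
  have hA : MeasurableSet A := measurableSet_le (hw.add_const β) hwσ
  have hgain : ∫⁻ x in D, ENNReal.ofReal (w x) ∂μ + ENNReal.ofReal β * μ (D ∩ A) ≤
      ∫⁻ x in D, ENNReal.ofReal (w (σ x)) ∂μ := by
    rw [Set.inter_comm, ← Measure.restrict_apply hA, ← lintegral_indicator_const hA,
      ← lintegral_add_left hw.ennreal_ofReal]
    refine setLIntegral_mono hwσ.ennreal_ofReal fun x hx => ?_
    by_cases hxA : x ∈ A
    · rw [Set.indicator_of_mem hxA, ← ENNReal.ofReal_add (hw0 x) hβ.le]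
      exact ENNReal.ofReal_le_ofReal hxA
    · rw [Set.indicator_of_notMem hxA, add_zero]
      exact ENNReal.ofReal_le_ofReal hx.2.2.le
  have himage : ∫⁻ x in D, ENNReal.ofReal (w (σ x)) ∂μ =
      ∫⁻ x in σ ⁻¹' D, ENNReal.ofReal (w x) ∂μ := by
    rw [← hμ.setLIntegral_comp_preimage hD hwσ.ennreal_ofReal]
    simp only [hσ _]
  rw [polarize_eq hσ hfix,
    lintegral_union (hμ.measurable hD) (disjoint_preimage_movedPart hσ), ← himage,
    ← lintegral_inter_add_sdiff _ E hD, Set.inter_eq_right.2 movedPart_subset,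
    add_comm (lintegral _ _), add_assoc]
  gcongr

end Measure

section Perimeter

variable [TopologicalSpace X]

theorem frontier_polarize_inter_eq_subset (hσ : Continuous σ)
    (hfix : ∀ x, w (σ x) = w x → σ x = x) :
    frontier (polarize σ w E) ∩ {x | w (σ x) = w x} ⊆ frontier E := by
  rintro x ⟨⟨hxc, hxi⟩, hx⟩
  have hσx : σ x = x := hfix x hx
  constructor
  · have hsub : polarize σ w E ⊆ E ∪ σ ⁻¹' E := fun y hy => by
      rcases hy with hy | hy
      exacts [Or.inl hy.1, hy.2]
    rcases closure_union.subset (closure_mono hsub hxc) with h | h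
    · exact h
    · exact hσx ▸ hσ.closure_preimage_subset E h
  · refine fun h => hxi (interior_mono (s := E ∩ σ ⁻¹' E) (fun y hy => Or.inl hy) ?_)
    rw [interior_inter]
    exact ⟨h, preimage_interior_subset_interior_preimage hσ (by rwa [Set.mem_preimage, hσx])⟩

theorem measure_frontier_polarize_le [MeasurableSpace X] [BorelSpace X] {ν : Measure X}
    (hσ : Function.Involutive σ) (hσc : Continuous σ) (hν : MeasurePreserving σ ν ν)
    (hw : Continuous w) (hfix : ∀ x, w (σ x) = w x → σ x = x) :
    ν (frontier (polarize σ w E)) ≤ ν (frontier E) := by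
  let G : Set X := {x | w x < w (σ x)}
  let G' : Set X := {x | w (σ x) < w x}
  have hG : IsOpen G := isOpen_lt hw (hw.comp hσc)
  have hG' : IsOpen G' := isOpen_lt (hw.comp hσc) hw
  have hreflect (A : Set X) : ν (frontier (σ ⁻¹' A) ∩ G) = ν (frontier A ∩ G') := by
    have hpre : frontier (σ ⁻¹' A) ∩ G = σ ⁻¹' (frontier A ∩ G') := by
      rw [Set.preimage_inter]
      congr 1
      · exact ((Homeomorph.mk (hσ.toPerm σ) hσc hσc).preimage_frontier A).symm
      · ext x; simp only [G, G', Set.mem_preimage, Set.mem_ofPred_eq, hσ x]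
    rw [hpre, hν.measure_preimage (isClosed_frontier.measurableSet.inter
      hG'.measurableSet).nullMeasurableSet]
  have hsplit (A : Set X) : ν (frontier A) = ν (frontier A ∩ G) + ν (frontier A ∩ G') +
      ν (frontier A ∩ {x | w (σ x) = w x}) :=
    (measure_inter_lt_add_inter_gt_add_inter_eq ν isClosed_frontier.measurableSet hw.measurable
      (hw.comp hσc).measurable).symm
  have hinvariant : σ ⁻¹' (E ∪ σ ⁻¹' E) = E ∪ σ ⁻¹' E := by
    rw [Set.preimage_union, ← Set.preimage_comp, hσ.comp_self, Set.preimage_id, Set.union_comm]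
  rw [hsplit, hsplit E, frontier_inter_congr hG polarize_inter_gt,
    frontier_inter_congr hG' polarize_inter_lt, ← hreflect E, ← hreflect (E ∪ _), hinvariant]
  refine add_le_add (measure_frontier_inter_add_union_le ν E _ hG.measurableSet) (measure_mono ?_)
  exact fun x hx => ⟨frontier_polarize_inter_eq_subset hσc hfix hx, hx.2⟩

end Perimeter

end Polarization

section NearMaximizer

theorem exists_forall_le_add_of_bounded {ι : Type*} {C : Set ι} (hC : C.Nonempty) (F : ι → ℝ≥0∞)
    {B η : ℝ≥0∞} (hB : B ≠ ∞) (hη : η ≠ 0) (hF : ∀ i ∈ C, F i ≤ B) :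
    ∃ i ∈ C, ∀ j ∈ C, F j ≤ F i + η := by
  have hsup : sSup (F '' C) ≠ ∞ := ne_top_of_le_ne_top hB (sSup_le (Set.forall_mem_image.2 hF))
  rcases eq_or_ne (sSup (F '' C)) 0 with hzero | hpos
  · obtain ⟨i, hi⟩ := hC
    exact ⟨i, hi, fun j hj => (le_sSup (Set.mem_image_of_mem F hj)).trans (hzero ▸ zero_le)⟩
  · obtain ⟨_, ⟨i, hi, rfl⟩, h⟩ := lt_sSup_iff.1 (ENNReal.sub_lt_self hsup hpos hη)
    exact ⟨i, hi, fun j hj =>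
      (le_sSup (Set.mem_image_of_mem F hj)).trans (tsub_le_iff_right.1 h.le)⟩

theorem exists_forall_measure_gain_le {X ι : Type*} [TopologicalSpace X] [MeasurableSpace X]
    [BorelSpace X] {μ ν : Measure X} {σ : ι → X → X} {w : X → ℝ} {H β : ℝ}
    (hσ : ∀ i, Function.Involutive (σ i)) (hσc : ∀ i, Continuous (σ i))
    (hμ : ∀ i, MeasurePreserving (σ i) μ μ) (hν : ∀ i, MeasurePreserving (σ i) ν ν)
    (hw : Continuous w) (hw0 : ∀ x, 0 ≤ w x) (hwH : ∀ x, w x ≤ H)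
    (hfix : ∀ i x, w (σ i x) = w x → σ i x = x) (hβ : 0 < β) {η : ℝ≥0∞} (hη : η ≠ 0)
    {E₀ : Set X} (hE₀ : MeasurableSet E₀) (hfin : μ E₀ ≠ ∞) :
    ∃ E, MeasurableSet E ∧ μ E = μ E₀ ∧ ν (frontier E) ≤ ν (frontier E₀) ∧
      ∀ i, μ (movedPart (σ i) w E ∩ {x | w x + β ≤ w (σ i x)}) ≤ η := by
  have hβ0 : ENNReal.ofReal β ≠ 0 := (ENNReal.ofReal_pos.2 hβ).ne'
  have hbound (E : Set X) (hE : μ E = μ E₀) :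
      ∫⁻ x in E, ENNReal.ofReal (w x) ∂μ ≤ ENNReal.ofReal H * μ E₀ := by
    rw [← hE, ← setLIntegral_const]
    exact lintegral_mono fun x => ENNReal.ofReal_le_ofReal (hwH x)
  obtain ⟨E, ⟨hE, hEμ, hEν⟩, hmax⟩ := exists_forall_le_add_of_bounded
    (C := {E | MeasurableSet E ∧ μ E = μ E₀ ∧ ν (frontier E) ≤ ν (frontier E₀)})
    ⟨E₀, hE₀, rfl, le_rfl⟩ (fun E => ∫⁻ x in E, ENNReal.ofReal (w x) ∂μ)
    (ENNReal.mul_ne_top ENNReal.ofReal_ne_top hfin) (mul_ne_zero hβ0 hη)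
    (fun E hE => hbound E hE.2.1)
  refine ⟨E, hE, hEμ, hEν, fun i => ?_⟩
  have hgain := (setLIntegral_add_le_setLIntegral_polarize (hσ i) (hμ i) hw.measurable hw0 (hfix i)
    hE hβ).trans (hmax (polarize (σ i) w E)
      ⟨measurableSet_polarize (hσc i).measurable hw.measurable hE,
        (measure_polarize (hσ i) (hμ i) hw.measurable (hfix i) hE).trans hEμ,
        (measure_frontier_polarize_le (hσ i) (hσc i) (hν i) hw (hfix i)).trans hEν⟩)
  have hlt : ∫⁻ x in E, ENNReal.ofReal (w x) ∂μ ≠ ∞ :=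
    ne_top_of_le_ne_top (ENNReal.mul_ne_top ENNReal.ofReal_ne_top hfin) (hbound E hEμ)
  exact (ENNReal.mul_le_mul_iff_right hβ0 ENNReal.ofReal_ne_top).1
    ((ENNReal.add_le_add_iff_left hlt).1 hgain)

end NearMaximizer

/-- A `2H`-periodic measure on the line is nearly unimodal if, for every `c` between `0` and `H`,
the subintervals of `[c, c + H]` have at most `η` more mass than their mirror images in `c`, which
lie closer to `0` modulo `2H`. The margins `β` keep away from degenerate reflections. -/
def NearlyUnimodal (μ : Measure ℝ) (H β : ℝ) (η : ℝ≥0∞) : Prop :=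
  ∀ c ∈ Set.Icc β (H - β), ∀ u v, c + β ≤ u → v ≤ c + H - β →
    μ (Set.Ico u v) ≤ μ (Set.Ioc (2 * c - v) (2 * c - u)) + η

section Reflection

variable {H : ℝ}

theorem norm_coe_addCircle (hH : 0 < H) {t : ℝ} (ht : |t| ≤ H) :
    ‖(t : AddCircle (2 * H))‖ = |t| := by
  rw [AddCircle.norm_coe_eq_abs_iff _ (by positivity), abs_of_pos (a := 2 * H) (by positivity)]
  linarith

theorem norm_coe_sub_add_le (hH : 0 < H) {β c u : ℝ} (hβ : 0 < β) (hc : c ∈ Set.Icc β (H - β))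
    (hu : u ∈ Set.Icc β (H - β)) :
    ‖((c - u : ℝ) : AddCircle (2 * H))‖ + 2 * β ≤ ‖((c + u : ℝ) : AddCircle (2 * H))‖ := by
  obtain ⟨hc₁, hc₂⟩ := hc
  obtain ⟨hu₁, hu₂⟩ := hu
  rw [norm_coe_addCircle hH (abs_le.2 ⟨by linarith, by linarith⟩), ← le_sub_iff_add_le]
  rcases le_total (c + u) H with h | h
  · rw [norm_coe_addCircle hH (abs_le.2 ⟨by linarith, h⟩), abs_of_pos (a := c + u) (by linarith),
      abs_le]
    constructor <;> linarith
  · have hperiod :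
        ((c + u : ℝ) : AddCircle (2 * H)) = ((c + u - 2 * H : ℝ) : AddCircle (2 * H)) := by
      rw [AddCircle.coe_sub, AddCircle.coe_period, sub_zero]
    rw [hperiod, norm_coe_addCircle hH (abs_le.2 ⟨by linarith, by linarith⟩),
      abs_of_neg (a := c + u - 2 * H) (by linarith), abs_le]
    constructor <;> linarith

theorem norm_coe_sub_lt (hH : 0 < H) {c u : ℝ} (hc : c ∈ Set.Ioo 0 H) (hu : u ∈ Set.Ioo 0 H) :
    ‖((c - u : ℝ) : AddCircle (2 * H))‖ < ‖((c + u : ℝ) : AddCircle (2 * H))‖ := by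
  obtain ⟨β, hβ, hβm⟩ := exists_between
    (lt_min (lt_min hc.1 (sub_pos.2 hc.2)) (lt_min hu.1 (sub_pos.2 hu.2)))
  simp only [lt_min_iff] at hβm
  have := norm_coe_sub_add_le hH hβ (c := c) (u := u) ⟨by linarith, by linarith⟩
    ⟨by linarith, by linarith⟩
  linarith

theorem sub_eq_self_of_norm_eq (hH : 0 < H) {c : ℝ} (hc : c ∈ Set.Ioo 0 H) {z : AddCircle (2 * H)}
    (hz : ‖((2 * c : ℝ) : AddCircle (2 * H)) - z‖ = ‖z‖) : (2 * c : ℝ) - z = z := by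
  have : Fact (0 < 2 * H) := ⟨by positivity⟩
  obtain ⟨t, ⟨ht₁, ht₂⟩, rfl⟩ := (AddCircle.coe_image_Ico_eq (2 * H) (c - H)).symm.subset
    (Set.mem_univ z)
  obtain ⟨u, rfl⟩ : ∃ u, t = c + u := ⟨t - c, by ring⟩
  have hreflect : ((2 * c : ℝ) : AddCircle (2 * H)) - (c + u : ℝ) = (c - u : ℝ) := by
    rw [← AddCircle.coe_sub]; congr 1; ring
  rw [hreflect] at hz ⊢
  rcases lt_trichotomy u 0 with hu | rfl | hu
  · rcases eq_or_lt_of_le (show -H ≤ u by linarith) with rfl | hu'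
    · rw [show c - -H = c + -H + 2 * H by ring, AddCircle.coe_add_period]
    · have := norm_coe_sub_lt hH hc (u := -u) ⟨by linarith, by linarith⟩
      rw [sub_neg_eq_add, ← sub_eq_add_neg] at this
      exact absurd hz this.ne'
  · rw [sub_zero, add_zero]
  · exact absurd hz (norm_coe_sub_lt hH hc ⟨hu, by linarith⟩).ne

variable {Y : Type*}

/-- The reflection of a cylinder over a circle in its first coordinate, fixing `c`. -/
def reflect (c : ℝ) : WithLp 2 (AddCircle (2 * H) × Y) → WithLp 2 (AddCircle (2 * H) × Y) :=
  baseMap (((2 * c : ℝ) : AddCircle (2 * H)) - ·)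

theorem reflect_involutive (c : ℝ) :
    Function.Involutive (reflect c : _ → WithLp 2 (AddCircle (2 * H) × Y)) := fun p => by
  change WithLp.toLp 2 (_ - (_ - p.fst), p.snd) = p
  rw [_root_.sub_sub_cancel]
  rfl

theorem reflect_eq_self (hH : 0 < H) {c : ℝ} (hc : c ∈ Set.Ioo 0 H)
    {p : WithLp 2 (AddCircle (2 * H) × Y)} (hp : ‖(reflect c p).fst‖ = ‖p.fst‖) :
    reflect c p = p := by
  have h : (2 * c : ℝ) - p.fst = p.fst := sub_eq_self_of_norm_eq hH hc hp
  rw [reflect, baseMap, h]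
  rfl

theorem norm_fst_reflect_add_le (hH : 0 < H) {β c t : ℝ} (hβ : 0 < β)
    (hc : c ∈ Set.Icc β (H - β)) (ht : t ∈ Set.Icc (c + β) (c + H - β))
    {p : WithLp 2 (AddCircle (2 * H) × Y)} (hp : p.fst = t) :
    ‖(reflect c p).fst‖ + 2 * β ≤ ‖p.fst‖ := by
  have h := norm_coe_sub_add_le hH hβ hc (u := t - c) ⟨by linarith [ht.1], by linarith [ht.2]⟩
  rwa [add_sub_cancel, show c - (t - c) = 2 * c - t by ring, AddCircle.coe_sub, ← hp] at h

variable [EMetricSpace Y]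

theorem isometry_reflect (c : ℝ) : Isometry (reflect c : _ → WithLp 2 (AddCircle (2 * H) × Y)) :=
  fun _ _ => edist_baseMap (edist_sub_left _ _ _)

theorem baseMeasure_circleLift_image_sub_left [MeasurableSpace (WithLp 2 (ℝ × Y))]
    [BorelSpace (WithLp 2 (ℝ × Y))] {d : ℝ} (hd : 0 ≤ d)
    (E : Set (WithLp 2 (AddCircle (2 * H) × Y))) (c : ℝ) {A : Set ℝ} (hA : MeasurableSet A) :
    baseMeasure d (circleLift E) ((2 * c - ·) '' A) =
      baseMeasure d (circleLift (reflect c ⁻¹' E)) A := by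
  have hcomm : circleLift (reflect c ⁻¹' E) = baseMap ((2 * c - ·) : ℝ → ℝ) ⁻¹' circleLift E := by
    rw [circleLift, circleLift, ← Set.preimage_comp, ← Set.preimage_comp]
    rfl
  have hA' : MeasurableSet ((2 * c - ·) '' A) :=
    (MeasurableEquiv.subLeft (2 * c)).measurableSet_image.2 hA
  rw [hcomm, baseMeasure_baseMap_preimage hd hA hA' rfl fun _ _ _ _ => edist_sub_left _ _ _]

variable [MeasurableSpace (WithLp 2 (AddCircle (2 * H) × Y))]
  [BorelSpace (WithLp 2 (AddCircle (2 * H) × Y))]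

theorem measurePreserving_reflect (d : ℝ) (c : ℝ) :
    MeasurePreserving (reflect c : _ → WithLp 2 (AddCircle (2 * H) × Y)) μH[d] μH[d] :=
  let e : WithLp 2 (AddCircle (2 * H) × Y) ≃ᵢ WithLp 2 (AddCircle (2 * H) × Y) :=
    ⟨(reflect_involutive c).toPerm _, isometry_reflect c⟩
  e.measurePreserving_hausdorffMeasure d

variable [MeasurableSpace (WithLp 2 (ℝ × Y))] [BorelSpace (WithLp 2 (ℝ × Y))]

theorem nearlyUnimodal_of_measure_movedPart_le {d : ℝ} (hd : 0 ≤ d) (hH : 0 < H) {β : ℝ}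
    (hβ : 0 < β) {η : ℝ≥0∞} {E : Set (WithLp 2 (AddCircle (2 * H) × Y))}
    (hE : ∀ c ∈ Set.Ioo 0 H, μH[d] (movedPart (reflect c) (fun p => H - ‖p.fst‖) E ∩
      {p | H - ‖p.fst‖ + 2 * β ≤ H - ‖(reflect c p).fst‖}) ≤ η) :
    NearlyUnimodal (baseMeasure d (circleLift E)) H β η := by
  have : Fact (0 < 2 * H) := ⟨by positivity⟩
  intro c hc u v hu hv
  rw [← Set.image_const_sub_Ico]
  set A := Set.Ico u v
  have hA : MeasurableSet A := measurableSet_Ico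
  have hAc : A ⊆ Set.Icc (c + β) (c + H - β) := fun t ht => ⟨hu.trans ht.1, ht.2.le.trans hv⟩
  have hAc' : A ⊆ Set.Ico c (c + 2 * H) := fun t ht =>
    ⟨by linarith [(hAc ht).1], by linarith [(hAc ht).2]⟩
  have hcH : c ∈ Set.Ioo 0 H := ⟨hβ.trans_le hc.1, hc.2.trans_lt (by linarith)⟩
  have hinj : Set.InjOn ((↑) : ℝ → AddCircle (2 * H)) A := fun x hx y hy h =>
    (AddCircle.coe_eq_coe_iff_of_mem_Ico (hAc' hx) (hAc' hy)).1 h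
  have hcoe : MeasurableSet (((↑) : ℝ → AddCircle (2 * H)) '' A) :=
    hA.image_of_continuousOn_injOn (AddCircle.continuous_mk' (2 * H)).continuousOn hinj
  have hlift (S : Set (WithLp 2 (AddCircle (2 * H) × Y))) :
      baseMeasure d (circleLift S) A = μH[d] (S ∩ WithLp.fst ⁻¹' ((↑) '' A)) := by
    rw [baseMeasure_circleLift (by positivity) hd _ hA hinj (hAc'.trans Set.Ico_subset_Icc_self),
      baseMeasure_apply _ _ hcoe]
  rw [baseMeasure_circleLift_image_sub_left hd E c hA, hlift, hlift, add_comm]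
  refine (measure_mono ?_).trans ((measure_union_le _ _).trans (add_le_add_left (hE c hcH) _))
  rintro p ⟨hpE, t, htA, htp⟩
  by_cases hp : reflect c p ∈ E
  · exact Or.inr ⟨hp, t, htA, htp⟩
  have hnorm := norm_fst_reflect_add_le hH hβ hc (hAc htA) htp.symm
  exact Or.inl ⟨⟨hpE, hp, by linarith⟩,
    show H - ‖p.fst‖ + 2 * β ≤ H - ‖(reflect c p).fst‖ by linarith⟩

theorem exists_nearlyUnimodal {d d' : ℝ} (hd : 0 ≤ d) (hH : 0 < H) {β : ℝ} (hβ : 0 < β) {η : ℝ≥0∞}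
    (hη : η ≠ 0) {E₀ : Set (WithLp 2 (AddCircle (2 * H) × Y))} (hE₀ : MeasurableSet E₀)
    (hfin : μH[d] E₀ ≠ ∞) :
    ∃ E : Set (WithLp 2 (AddCircle (2 * H) × Y)), μH[d] E = μH[d] E₀ ∧
      μH[d'] (frontier E) ≤ μH[d'] (frontier E₀) ∧
      NearlyUnimodal (baseMeasure d (circleLift E)) H β η := by
  have hnorm (p : WithLp 2 (AddCircle (2 * H) × Y)) : ‖p.fst‖ ≤ H :=
    (AddCircle.norm_le_half_period _ (by positivity)).trans_eq
      (by rw [abs_of_pos (by positivity)]; ring)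
  obtain ⟨E, -, hEd, hEd', hgain⟩ := exists_forall_measure_gain_le
    (w := fun p : WithLp 2 (AddCircle (2 * H) × Y) => H - ‖p.fst‖) (ν := μH[d']) (β := 2 * β)
    (fun c : Set.Ioo 0 H => reflect_involutive c.1) (fun c => (isometry_reflect c.1).continuous)
    (fun c => measurePreserving_reflect d c.1) (fun c => measurePreserving_reflect d' c.1)
    (continuous_const.sub (WithLp.continuous_fst 2 _ _).norm)
    (fun p => sub_nonneg.2 (hnorm p)) (fun p => sub_le_self _ (norm_nonneg _))
    (fun c p hp => reflect_eq_self hH c.2 (sub_right_injective hp)) (by positivity) hη hE₀ hfin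
  exact ⟨E, hEd, hEd',
    nearlyUnimodal_of_measure_movedPart_le hd hH hβ fun c hc => hgain ⟨c, hc⟩⟩

end Reflection

section Line

variable {μ : Measure ℝ} {H β : ℝ} {η : ℝ≥0∞}

theorem exists_measure_Ico_eq [NullSingletonClass μ] [IsLocallyFiniteMeasure μ] {a b : ℝ}
    (hab : a ≤ b) : ∃ x ∈ Set.Icc a b, μ (Set.Ico a x) = μ (Set.Ico x b) := by
  have hint (s t : ℝ) : IntervalIntegrable (fun _ : ℝ => (1 : ℝ)) μ s t := intervalIntegrable_const
  have hIoc {s t : ℝ} (hst : s ≤ t) : ∫ _ in s..t, (1 : ℝ) ∂μ = μ.real (Set.Ioc s t) := by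
    rw [intervalIntegral.integral_of_le hst, setIntegral_const, smul_eq_mul, mul_one]
  let F (x : ℝ) : ℝ := ∫ _ in a..x, (1 : ℝ) ∂μ
  have hF : Continuous F := intervalIntegral.continuous_primitive hint a
  have hFb : 0 ≤ F b := measureReal_nonneg.trans_eq (hIoc hab).symm
  obtain ⟨x, hx, hFx⟩ := intermediate_value_Icc hab hF.continuousOn
    (show F b / 2 ∈ Set.Icc (F a) (F b) from
      ⟨by rw [show F a = 0 from intervalIntegral.integral_same]; positivity, by linarith⟩)
  refine ⟨x, hx, ?_⟩
  have hsum : F x + ∫ _ in x..b, (1 : ℝ) ∂μ = F b :=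
    intervalIntegral.integral_add_adjacent_intervals (hint a x) (hint x b)
  have hreal : μ.real (Set.Ioc a x) = μ.real (Set.Ioc x b) := by
    rw [← hIoc hx.1, ← hIoc hx.2]
    linarith [show F x = ∫ _ in a..x, (1 : ℝ) ∂μ from rfl]
  rw [measure_congr Ico_ae_eq_Ioc, measure_congr (Ico_ae_eq_Ioc (a := x))]
  exact (ENNReal.toReal_eq_toReal_iff' measure_Ioc_lt_top.ne measure_Ioc_lt_top.ne).1 hreal

variable {V : ℝ≥0∞}

theorem isLocallyFiniteMeasure_of_period {L : ℝ} (hL : 0 < L) (hV : V ≠ ∞)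
    (hper : ∀ s, μ (Set.Ico s (s + L)) = V) : IsLocallyFiniteMeasure μ :=
  ⟨fun x => ⟨Set.Ico (x - L / 2) (x - L / 2 + L), Ico_mem_nhds (by linarith) (by linarith),
    (hper _).trans_lt hV.lt_top⟩⟩

theorem measure_Ico_add_period (hV : V ≠ ∞) (hper : ∀ s, μ (Set.Ico s (s + 2 * H)) = V) {a b : ℝ}
    (hab : a ≤ b) (hba : b ≤ a + 2 * H) :
    μ (Set.Ico (a + 2 * H) (b + 2 * H)) = μ (Set.Ico a b) := by
  have hsplit : μ (Set.Ico b (a + 2 * H)) + μ (Set.Ico (a + 2 * H) (b + 2 * H)) =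
      μ (Set.Ico b (a + 2 * H)) + μ (Set.Ico a b) := by
    rw [measure_Ico_add_measure_Ico μ hba (by linarith), hper, add_comm,
      measure_Ico_add_measure_Ico μ hab hba, hper]
  refine (ENNReal.add_right_inj (ne_top_of_le_ne_top hV ?_)).1 hsplit
  rw [← hper a]
  gcongr

namespace NearlyUnimodal

theorem measure_Ico_right_le (hμ : NearlyUnimodal μ H β η) (hβ : 0 < β) (hβH : 2 * β ≤ H) :
    μ (Set.Ico (2 * β) H) ≤ μ (Set.Ico (-H) (2 * β)) + η := by
  refine (hμ β ⟨le_rfl, by linarith⟩ _ _ (by linarith) (by linarith)).trans ?_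
  gcongr
  exact fun t ht => ⟨by linarith [ht.1], by linarith [ht.2]⟩

theorem measure_Ico_left_le (hμ : NearlyUnimodal μ H β η) (hβ : 0 < β) (hβH : 2 * β ≤ H)
    (hV : V ≠ ∞) (hper : ∀ s, μ (Set.Ico s (s + 2 * H)) = V) :
    μ (Set.Ico (-H) (-(2 * β))) ≤ μ (Set.Ico (-(2 * β)) H) + η := by
  rw [← measure_Ico_add_period hV hper (a := -H) (by linarith) (by linarith)]
  refine (hμ (H - β) ⟨by linarith, le_rfl⟩ _ _ (by linarith) (by linarith)).trans ?_
  gcongr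
  exact fun t ht => ⟨by linarith [ht.1], by linarith [ht.2]⟩

theorem exists_balanced [NullSingletonClass μ] (hμ : NearlyUnimodal μ H β η) (hβ : 0 < β)
    (hβH : 2 * β ≤ H) (hV : V ≠ ∞) (hper : ∀ s, μ (Set.Ico s (s + 2 * H)) = V) :
    ∃ x ∈ Set.Icc (-(2 * β)) (2 * β),
      2 * μ (Set.Ico (-H) x) ≤ V + η ∧ 2 * μ (Set.Ico x H) ≤ V + η := by
  have := isLocallyFiniteMeasure_of_period (by linarith) hV hper
  obtain ⟨x, hx, hleft, hright⟩ : ∃ x ∈ Set.Icc (-(2 * β)) (2 * β),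
      μ (Set.Ico (-H) x) ≤ μ (Set.Ico x H) + η ∧ μ (Set.Ico x H) ≤ μ (Set.Ico (-H) x) + η := by
    obtain ⟨x, -, hx⟩ := exists_measure_Ico_eq (μ := μ) (show -H ≤ H by linarith)
    rcases le_total x (-(2 * β)) with hleft | hleft
    · refine ⟨_, Set.left_mem_Icc.2 (by linarith), hμ.measure_Ico_left_le hβ hβH hV hper, ?_⟩
      calc μ (Set.Ico (-(2 * β)) H) ≤ μ (Set.Ico x H) := by gcongr
        _ = μ (Set.Ico (-H) x) := hx.symm
        _ ≤ μ (Set.Ico (-H) (-(2 * β))) := by gcongr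
        _ ≤ _ := le_self_add
    rcases le_total (2 * β) x with hright | hright
    · refine ⟨_, Set.right_mem_Icc.2 (by linarith), ?_, hμ.measure_Ico_right_le hβ hβH⟩
      calc μ (Set.Ico (-H) (2 * β)) ≤ μ (Set.Ico (-H) x) := by gcongr
        _ = μ (Set.Ico x H) := hx
        _ ≤ μ (Set.Ico (2 * β) H) := by gcongr
        _ ≤ _ := le_self_add
    · exact ⟨x, ⟨hleft, hright⟩, hx.trans_le le_self_add, hx.symm.trans_le le_self_add⟩
  have hsum : μ (Set.Ico (-H) x) + μ (Set.Ico x H) = V := by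
    rw [measure_Ico_add_measure_Ico μ (by linarith [hx.1]) (by linarith [hx.2]), ← hper (-H)]
    ring_nf
  refine ⟨x, hx, ?_, ?_⟩ <;> rw [← hsum, two_mul]
  · rw [add_assoc]
    gcongr
  · rw [add_comm (μ (Set.Ico (-H) x)), add_assoc]
    gcongr

theorem two_mul_mul_measure_Ico_le [NullSingletonClass μ] (hμ : NearlyUnimodal μ H β η) {h : ℝ}
    (hh : 0 < h) {k : ℕ} (hk : k ≠ 0) (hβ : 8 * β = h / k) (hhH : h + h / k ≤ H)
    (hper : ∀ s, μ (Set.Ico s (s + 2 * H)) = V) {a : ℝ} (ha : h - 2 * β ≤ a)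
    (ha' : a + h + h / k ≤ 2 * H + 2 * β) :
    2 * k * μ (Set.Ico a (a + h / k)) ≤ V + 2 * k * η := by
  set δ := h / k
  have hδ : 0 < δ := by positivity
  have hkδ : k * δ = h := mul_div_cancel₀ h (by positivity)
  obtain ⟨c, hcβ, hcH, hcH', hca⟩ : ∃ c, β ≤ c ∧ a + δ + β - H ≤ c ∧
      c + h - δ / 2 ≤ H - β ∧ c + h - δ / 2 ≤ a - β := by
    refine ⟨max β (a + δ + β - H), le_max_left _ _, le_max_right _ _, ?_, ?_⟩ <;>
      rw [add_sub_assoc, max_add, max_le_iff] <;> constructor <;> linarith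
  -- The mirror images of the cell in the points `c + j * δ / 2`, `j < 2 * k`, tile an interval of
  -- length `2 * h`.
  let t (j : ℕ) : ℝ := 2 * c - a - δ + j * δ
  have ht : Monotone t := fun i j hij => by
    have : (i : ℝ) ≤ j := by exact_mod_cast hij
    simp only [t]
    gcongr
  have hcopy : ∀ j ∈ Finset.range (2 * k),
      μ (Set.Ico a (a + δ)) ≤ μ (Set.Ioc (t j) (t (j + 1))) + η := fun j hj => by
    have hjδ : (j + 1) * δ ≤ 2 * h := by
      rw [← hkδ, ← mul_assoc]
      gcongr
      exact_mod_cast Finset.mem_range.1 hj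
    have hj0 : 0 ≤ j * δ := by positivity
    convert hμ (c + j * δ / 2) ⟨by linarith, by linarith⟩ a (a + δ) (by linarith) (by linarith)
      using 4
    · simp only [t]; ring
    · simp only [t]; push_cast; ring
  have hsum := Finset.sum_le_sum hcopy
  rw [Finset.sum_add_distrib, sum_measure_Ioc μ ht, Finset.sum_const, Finset.sum_const,
    Finset.card_range, nsmul_eq_mul, nsmul_eq_mul] at hsum
  push_cast at hsum
  refine hsum.trans ?_
  gcongr
  rw [← hper (t 0), measure_congr Ico_ae_eq_Ioc]
  gcongr
  simp only [t]
  push_cast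
  linarith

end NearlyUnimodal

end Line

section Windows

variable {μ ν : Measure ℝ} {J V : ℝ≥0∞}

theorem two_mul_mul_le_of_min_le {k : ℕ} (hk : k ≠ 0) {w N η : ℝ≥0∞}
    (hwin : 2 * J * min w (V / (2 * k)) ≤ N) (hw : 2 * k * w ≤ V + 2 * k * η) :
    2 * J * w ≤ N + 2 * J * η := by
  have hw' : w ≤ V / (2 * k) + η := by
    refine (ENNReal.mul_le_mul_iff_right (a := 2 * k) (by positivity) (by finiteness)).1 ?_
    rwa [mul_add, ENNReal.mul_div_cancel (by positivity) (by finiteness)]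
  calc 2 * J * w ≤ 2 * J * (min w (V / (2 * k)) + η) := by
        gcongr
        rw [min_add]
        exact le_min le_self_add hw'
    _ ≤ N + 2 * J * η := by
        rw [mul_add]
        gcongr

theorem mul_measure_Ico_le_trans {C e e' : ℝ≥0∞} {a b c : ℝ} (hab : a ≤ b) (hbc : b ≤ c)
    (h : C * μ (Set.Ico a b) ≤ V * (ν (Set.Ico a b) + ν (Set.Ioc a b)) + e)
    (h' : C * μ (Set.Ico b c) ≤ V * (ν (Set.Ico b c) + ν (Set.Ioc b c)) + e') :
    C * μ (Set.Ico a c) ≤ V * (ν (Set.Ico a c) + ν (Set.Ioc a c)) + (e + e') := by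
  rw [← measure_Ico_add_measure_Ico μ hab hbc, ← measure_Ico_add_measure_Ico ν hab hbc,
    ← measure_Ioc_add_measure_Ioc ν hab hbc]
  calc C * (μ (Set.Ico a b) + μ (Set.Ico b c)) ≤ _ := (mul_add _ _ _).trans_le (add_le_add h h')
    _ = _ := by ring

theorem mul_measure_Ico_le_of_cells {C e : ℝ≥0∞} {δ : ℝ} (hδ : 0 ≤ δ) (y : ℝ) (q : ℕ)
    (hcell : ∀ j < q, C * μ (Set.Ico (y + j * δ) (y + j * δ + δ)) ≤
      V * (ν (Set.Ico (y + j * δ) (y + j * δ + δ)) + ν (Set.Ioc (y + j * δ) (y + j * δ + δ))) + e) :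
    C * μ (Set.Ico y (y + q * δ)) ≤
      V * (ν (Set.Ico y (y + q * δ)) + ν (Set.Ioc y (y + q * δ))) + q * e := by
  induction q with
  | zero => simp
  | succ q ih =>
    rw [show y + (q + 1 : ℕ) * δ = y + q * δ + δ by push_cast; ring, Nat.cast_succ, add_one_mul]
    exact mul_measure_Ico_le_trans (by linarith [show 0 ≤ q * δ by positivity]) (by linarith)
      (ih fun j hj => hcell j (hj.trans q.lt_succ_self)) (hcell q q.lt_succ_self)

namespace NearlyUnimodal

variable {H β h : ℝ} {η P : ℝ≥0∞} {k : ℕ} [NullSingletonClass μ]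

theorem two_mul_mul_measure_cells_le (hμ : NearlyUnimodal μ H β η) (hh : 0 < h) (hk : k ≠ 0)
    (hβ : 8 * β = h / k) (hhH : h + h / k ≤ H) (hμV : ∀ s, μ (Set.Ico s (s + 2 * H)) = V)
    (hwin : ∀ x, 2 * J * min (μ (Set.Ico x (x + h / k))) (V / (2 * k)) ≤
      V * (ν (Set.Ico x (x + h / k)) + ν (Set.Ioc x (x + h / k))))
    {y : ℝ} (hy : h - 2 * β ≤ y) {q : ℕ} (hq : y + q * (h / k) + h ≤ 2 * H + 2 * β) :
    2 * J * μ (Set.Ico y (y + q * (h / k))) ≤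
      V * (ν (Set.Ico y (y + q * (h / k))) + ν (Set.Ioc y (y + q * (h / k)))) +
        q * (2 * J * η) := by
  have hδ : 0 < h / k := by positivity
  refine mul_measure_Ico_le_of_cells hδ.le y q fun j hj => ?_
  have hj0 : 0 ≤ j * (h / k) := by positivity
  have hjq : (j + 1) * (h / k) ≤ q * (h / k) := by
    gcongr
    exact_mod_cast hj
  exact two_mul_mul_le_of_min_le hk (hwin _)
    (hμ.two_mul_mul_measure_Ico_le hh hk hβ hhH hμV (by linarith) (by linarith))

theorem measure_Ico_le_of_sub_le (hμ : NearlyUnimodal μ H β η) (hh : 0 < h) (hk : k ≠ 0)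
    (hβ : 8 * β = h / k) (hhH : h + h / k ≤ H) (hμV : ∀ s, μ (Set.Ico s (s + 2 * H)) = V)
    {u v : ℝ} (huv : v ≤ u + h / k) (hv : h - 2 * β + h / k ≤ v) (hv' : v + h ≤ 2 * H + 2 * β) :
    μ (Set.Ico u v) ≤ V / (2 * k) + η := by
  have hcell := hμ.two_mul_mul_measure_Ico_le hh hk hβ hhH hμV (a := v - h / k) (by linarith)
    (by linarith)
  refine (ENNReal.mul_le_mul_iff_right (a := 2 * k) (by positivity) (by finiteness)).1 ?_
  rw [mul_add, ENNReal.mul_div_cancel (by positivity) (by finiteness)]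
  refine le_trans ?_ hcell
  gcongr <;> linarith

theorem exists_two_mul_mul_measure_Ico_le (hμ : NearlyUnimodal μ H β η) (hh : 0 < h)
    (hβ : 0 < β) (hβH : 2 * β ≤ H) (hhH : h + 2 * β ≤ H) (hV : V ≠ ∞)
    (hμV : ∀ s, μ (Set.Ico s (s + 2 * H)) = V)
    (hwin : ∀ x, 2 * J * min (μ (Set.Ico x (x + h))) (V / 2) ≤
      V * (ν (Set.Ico x (x + h)) + ν (Set.Ioc x (x + h)))) :
    ∃ x ∈ Set.Icc (-(2 * β)) (2 * β), 2 * J * μ (Set.Ico (x - h) (x + h)) ≤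
      V * (ν (Set.Ico (x - h) (x + h)) + ν (Set.Ioc (x - h) (x + h))) +
        (2 * J * η + 2 * J * η) := by
  obtain ⟨x, hx, hleft, hright⟩ := hμ.exists_balanced hβ hβH hV hμV
  have hhalf {u v : ℝ} (huv : v = u + h) (hu : 2 * μ (Set.Ico u v) ≤ V + η) :
      2 * J * μ (Set.Ico u v) ≤ V * (ν (Set.Ico u v) + ν (Set.Ioc u v)) + 2 * J * η := by
    subst huv
    refine two_mul_mul_le_of_min_le one_ne_zero (by simpa using hwin u) ?_
    rw [Nat.cast_one, mul_one]
    exact hu.trans (add_le_add_right (le_mul_of_one_le_left zero_le one_le_two) V)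
  obtain ⟨hx₁, hx₂⟩ := hx
  exact ⟨x, ⟨hx₁, hx₂⟩, mul_measure_Ico_le_trans (by linarith) (by linarith)
    (hhalf (by ring) (le_trans (by gcongr; linarith) hleft))
    (hhalf rfl (le_trans (by gcongr; linarith) hright))⟩

theorem two_mul_mul_le (hμ : NearlyUnimodal μ H β η) (hh : 0 < h) (hk : k ≠ 0)
    (hβ : 8 * β = h / k) (hhH : h + h / k ≤ H) (hV : V ≠ ∞)
    (hμV : ∀ s, μ (Set.Ico s (s + 2 * H)) = V)
    (hν : ∀ s, ν (Set.Ico s (s + 2 * H)) + ν (Set.Ioc s (s + 2 * H)) = 2 * P)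
    (hwin : ∀ i : ℕ, i ≠ 0 → ∀ x, 2 * J * min (μ (Set.Ico x (x + h / i))) (V / (2 * i)) ≤
      V * (ν (Set.Ico x (x + h / i)) + ν (Set.Ioc x (x + h / i)))) :
    2 * J * V ≤ V * (2 * P) +
      2 * J * ((⌊2 * (H - h) / (h / k)⌋₊ + 3) * η + V / (2 * k)) := by
  set q := ⌊2 * (H - h) / (h / k)⌋₊
  have hδ : 0 < h / k := by positivity
  have hqδ : q * (h / k) ≤ 2 * (H - h) := by
    rw [← le_div_iff₀ hδ]
    exact Nat.floor_le (div_nonneg (by linarith) hδ.le)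
  have hqδ' : 2 * (H - h) ≤ (q + 1) * (h / k) := by
    rw [← div_le_iff₀ hδ]
    exact (Nat.lt_floor_add_one _).le
  obtain ⟨x, ⟨hx₁, hx₂⟩, hcentral⟩ := hμ.exists_two_mul_mul_measure_Ico_le hh (by linarith)
    (by linarith) (by linarith) hV hμV (by simpa using hwin 1 one_ne_zero)
  have hcells := hμ.two_mul_mul_measure_cells_le hh hk hβ hhH hμV (hwin k hk) (y := x + h) (q := q)
    (by linarith) (by linarith)
  have hmain := mul_measure_Ico_le_trans (by linarith) (by linarith) hcentral hcells
  set y := x + h + q * (h / k)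
  have hrest : μ (Set.Ico y (x - h + 2 * H)) ≤ V / (2 * k) + η :=
    hμ.measure_Ico_le_of_sub_le hh hk hβ hhH hμV (by linarith) (by linarith) (by linarith)
  have hyH : y ≤ x - h + 2 * H := by linarith
  calc 2 * J * V = 2 * J * μ (Set.Ico (x - h) y) + 2 * J * μ (Set.Ico y (x - h + 2 * H)) := by
        rw [← mul_add, measure_Ico_add_measure_Ico μ (by linarith) hyH, hμV]
    _ ≤ V * (2 * P) + (2 * J * η + 2 * J * η + q * (2 * J * η)) +
          2 * J * (V / (2 * k) + η) := by
        refine add_le_add (hmain.trans ?_) (by gcongr)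
        rw [← hν (x - h)]
        gcongr
    _ = _ := by ring

end NearlyUnimodal

end Windows

section CompareCircles

variable {Y : Type*} [NormedAddCommGroup Y] [InnerProductSpace ℝ Y] [FiniteDimensional ℝ Y]
  [MeasurableSpace Y] [BorelSpace Y] {m : ℕ} {h H V : ℝ} {J : ℝ≥0∞}
  {A : Set (WithLp 2 (AddCircle (2 * H) × Y))}

theorem NearlyUnimodal.two_mul_mul_ofReal_le (hY : Module.finrank ℝ Y = m) (hm : m ≠ 0)
    (hh : 0 < h) {k : ℕ} (hk : k ≠ 0) (hhH : h + h / k ≤ H) (hV : 0 < V)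
    (hJ : ∀ S : Set (WithLp 2 (AddCircle (2 * h) × Y)),
      μH[(m + 1 : ℕ)] S = ENNReal.ofReal V → J ≤ μH[m] (frontier S))
    (hAV : μH[(m + 1 : ℕ)] A = ENNReal.ofReal V) {β : ℝ} (hβ : 8 * β = h / k) {η : ℝ≥0∞}
    (hA : NearlyUnimodal (baseMeasure (m + 1 : ℕ) (circleLift A)) H β η) :
    2 * J * ENNReal.ofReal V ≤ ENNReal.ofReal V * (2 * μH[m] (frontier A)) +
      2 * J * ((⌊2 * (H - h) / (h / k)⌋₊ + 3) * η + ENNReal.ofReal V / (2 * k)) := by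
  have hδ : 0 < h / k := by positivity
  have hL : 0 < 2 * H := by linarith
  have := nullSingletonClass_baseMeasure hY (circleLift A)
  have hper (s : ℝ) : baseMeasure (m + 1 : ℕ) (circleLift A) (Set.Ico s (s + 2 * H)) =
      ENNReal.ofReal V := by
    rw [baseMeasure_circleLift_Ico hL (by positivity), hAV]
  have hfr (s : ℝ) : baseMeasure m (frontier (circleLift A)) (Set.Ico s (s + 2 * H)) +
      baseMeasure m (frontier (circleLift A)) (Set.Ioc s (s + 2 * H)) = 2 * μH[m] (frontier A) := by
    rw [← circleLift_frontier, baseMeasure_circleLift_Ico hL (by positivity),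
      baseMeasure_circleLift_Ioc hL (by positivity)]
    exact (two_mul _).symm
  refine hA.two_mul_mul_le hh hk hβ hhH ENNReal.ofReal_ne_top hper hfr fun i hi x => ?_
  have hhi : h / i ≤ 2 * H :=
    (div_le_self hh.le (Nat.one_le_cast.2 (Nat.pos_of_ne_zero hi))).trans (by linarith)
  have hwin := two_mul_mul_min_le hY hm hh hi hV hJ (circleLift A) x
    (ne_top_of_le_ne_top (hper x ▸ ENNReal.ofReal_ne_top) (by gcongr))
  rwa [ENNReal.ofReal_div_of_pos (by positivity), ENNReal.ofReal_mul zero_le_two,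
    ENNReal.ofReal_ofNat, ENNReal.ofReal_natCast] at hwin

theorem le_hausdorffMeasure_frontier_add_div (hY : Module.finrank ℝ Y = m) (hm : m ≠ 0)
    (hh : 0 < h) {k : ℕ} (hk : k ≠ 0) (hhH : h + h / k ≤ H) (hV : 0 < V)
    (hJ : ∀ S : Set (WithLp 2 (AddCircle (2 * h) × Y)),
      μH[(m + 1 : ℕ)] S = ENNReal.ofReal V → J ≤ μH[m] (frontier S))
    (hA : MeasurableSet A) (hAV : μH[(m + 1 : ℕ)] A = ENNReal.ofReal V) :
    J ≤ μH[m] (frontier A) + J / k := by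
  have hδ : 0 < h / k := by positivity
  have hH : 0 < H := by linarith
  have hV₀ : ENNReal.ofReal V ≠ 0 := (ENNReal.ofReal_pos.2 hV).ne'
  let q := ⌊2 * (H - h) / (h / k)⌋₊
  obtain ⟨η, hη₀, hη⟩ : ∃ η ≠ 0, (q + 3) * η = ENNReal.ofReal V / (2 * k) := by
    refine ⟨ENNReal.ofReal V / (2 * k) / (q + 3), ?_, ?_⟩
    · exact ENNReal.div_ne_zero.2 ⟨ENNReal.div_ne_zero.2 ⟨hV₀, by finiteness⟩, by finiteness⟩
    · exact ENNReal.mul_div_cancel (by positivity) (by finiteness)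
  obtain ⟨E, hEV, hEfr, hE⟩ := exists_nearlyUnimodal (d := (m + 1 : ℕ)) (d' := m) (by positivity) hH
    (β := h / k / 8) (by positivity) hη₀ hA (hAV ▸ ENNReal.ofReal_ne_top)
  have hmain := hE.two_mul_mul_ofReal_le hY hm hh hk hhH hV hJ (hEV.trans hAV) (by ring)
  rw [hη, ← two_mul, ← mul_div_assoc, ENNReal.mul_div_mul_left _ _ two_ne_zero (by finiteness)]
    at hmain
  refine (ENNReal.mul_le_mul_iff_right (a := 2 * ENNReal.ofReal V) (by simpa) (by finiteness)).1 ?_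
  calc 2 * ENNReal.ofReal V * J = 2 * J * ENNReal.ofReal V := by ring
    _ ≤ _ := hmain
    _ = 2 * ENNReal.ofReal V * (μH[m] (frontier E) + J / k) := by
        simp only [div_eq_mul_inv]
        ring
    _ ≤ _ := by gcongr

theorem le_hausdorffMeasure_frontier_of_le (hY : Module.finrank ℝ Y = m) (hm : m ≠ 0)
    {L L' : ℝ} (hL : 0 < L) (hLL' : L ≤ L') (hV : 0 < V)
    (hJ : ∀ S : Set (WithLp 2 (AddCircle L × Y)),
      μH[(m + 1 : ℕ)] S = ENNReal.ofReal V → J ≤ μH[m] (frontier S))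
    {A : Set (WithLp 2 (AddCircle L' × Y))} (hA : MeasurableSet A)
    (hAV : μH[(m + 1 : ℕ)] A = ENNReal.ofReal V) : J ≤ μH[m] (frontier A) := by
  obtain rfl | hlt := hLL'.eq_or_lt
  · exact hJ A hAV
  obtain ⟨h, rfl⟩ : ∃ h, L = 2 * h := ⟨L / 2, by ring⟩
  obtain ⟨H, rfl⟩ : ∃ H, L' = 2 * H := ⟨L' / 2, by ring⟩
  have hh : 0 < h := by linarith
  have hhH : 0 < H - h := by linarith
  refine ENNReal.le_of_forall_nnreal_lt fun r hr => ?_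
  have hlim : Filter.Tendsto (fun k : ℕ => μH[m] (frontier A) + r / (k : ℝ≥0∞)) Filter.atTop
      (nhds (μH[m] (frontier A))) := by
    simpa using (ENNReal.Tendsto.const_div ENNReal.tendsto_nat_nhds_top
      (Or.inr ENNReal.coe_ne_top)).const_add _
  refine ge_of_tendsto hlim ?_
  filter_upwards [Filter.eventually_ge_atTop ⌈h / (H - h)⌉₊, Filter.eventually_ne_atTop 0]
    with k hk hk₀
  have hk' : h / k ≤ H - h := by
    rw [div_le_comm₀ (by positivity) hhH]
    exact (Nat.le_ceil _).trans (by exact_mod_cast hk)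
  exact le_hausdorffMeasure_frontier_add_div hY hm hh hk₀ (by linarith) hV
    (fun S hS => hr.le.trans (hJ S hS)) hA hAV

end CompareCircles

theorem hausdorffMeasure_ne_top_of_univ_ne_top {L L' : ℝ} (hL : 0 < L) (hL' : 0 < L') {Y : Type*}
    [EMetricSpace Y] [MeasurableSpace (WithLp 2 (ℝ × Y))] [BorelSpace (WithLp 2 (ℝ × Y))]
    [MeasurableSpace (WithLp 2 (AddCircle L × Y))] [BorelSpace (WithLp 2 (AddCircle L × Y))]
    [MeasurableSpace (WithLp 2 (AddCircle L' × Y))] [BorelSpace (WithLp 2 (AddCircle L' × Y))]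
    {d : ℝ} (hd : 0 ≤ d) (h : μH[d] (Set.univ : Set (WithLp 2 (AddCircle L × Y))) ≠ ∞)
    (A : Set (WithLp 2 (AddCircle L' × Y))) : μH[d] A ≠ ∞ := by
  let μ := baseMeasure d (Set.univ : Set (WithLp 2 (ℝ × Y)))
  have hper (s : ℝ) : μ (Set.Ico s (s + L)) = μH[d] (Set.univ : Set (WithLp 2 (AddCircle L × Y))) :=
    baseMeasure_circleLift_Ico hL hd Set.univ s
  have := isLocallyFiniteMeasure_of_period hL h hper
  have hμ : μH[d] (Set.univ : Set (WithLp 2 (AddCircle L' × Y))) = μ (Set.Ico 0 (0 + L')) :=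
    (baseMeasure_circleLift_Ico hL' hd Set.univ 0).symm
  exact ne_top_of_le_ne_top (hμ ▸ measure_Ico_lt_top.ne) (measure_mono (Set.subset_univ A))

theorem isoProfile_zero (X : Type*) [EMetricSpace X] (m : ℕ) : isoProfile X m 0 = 0 := by
  borelize X
  refine nonpos_iff_eq_zero.1 ((iInf₂_le ∅ ⟨⟨∅, isOpen_empty, closure_empty.symm⟩, ?_⟩).trans_eq ?_)
  all_goals simp [haus_eq_hausdorffMeasure]

theorem isoProfile_haus_univ (X : Type*) [EMetricSpace X] (m : ℕ) :
    isoProfile X m (haus X m Set.univ) = 0 := by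
  borelize X
  refine nonpos_iff_eq_zero.1
    ((iInf₂_le Set.univ ⟨⟨_, isOpen_univ, closure_univ.symm⟩, rfl⟩).trans_eq ?_)
  simp [haus_eq_hausdorffMeasure]

theorem isoProfile_le_isoProfile_of_radius_le {r r' : ℝ} (hr : 0 < r) (hrr' : r ≤ r') {m : ℕ}
    (hm : m ≠ 0) (v : ℝ≥0∞) :
    isoProfile (S1R r m) (m + 1) v ≤ isoProfile (S1R r' m) (m + 1) v := by
  have hL : 0 < 2 * π * r := by positivity
  have hLL' : 2 * π * r ≤ 2 * π * r' := by gcongr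
  refine le_iInf₂ fun U hU => ?_
  obtain ⟨⟨W, -, hW⟩, hUv⟩ := hU
  have hUm : MeasurableSet U := hW ▸ isClosed_closure.measurableSet
  rw [haus_eq_hausdorffMeasure] at hUv ⊢
  rcases eq_or_ne v 0 with rfl | hv₀
  · exact (isoProfile_zero _ _).trans_le zero_le
  rcases eq_or_ne v ∞ with rfl | hv
  · have huniv : haus (S1R r m) (m + 1) Set.univ = ∞ := by
      rw [haus_eq_hausdorffMeasure]
      by_contra h
      exact hausdorffMeasure_ne_top_of_univ_ne_top hL (hL.trans_le hLL') (by positivity) h U hUv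
    exact huniv ▸ (isoProfile_haus_univ _ _).trans_le zero_le
  rw [← ENNReal.ofReal_toReal hv] at hUv ⊢
  exact le_hausdorffMeasure_frontier_of_le finrank_euclideanSpace_fin hm hL hLL'
    (ENNReal.toReal_pos hv₀ hv) (fun S hS => hS ▸ isoProfile_le_frontier m S) hUm hUv

section Cut

variable {L : ℝ} {Y : Type*} {A : Set (WithLp 2 (AddCircle L × Y))}

/-- The lift of `A`, restricted to the open period `(s, s + L)`: what is left of `A` after cutting
the circle `ℝ / Lℤ` at `s`. -/
def unroll (s : ℝ) (A : Set (WithLp 2 (AddCircle L × Y))) : Set (WithLp 2 (ℝ × Y)) :=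
  circleLift A ∩ WithLp.fst ⁻¹' Set.Ioo s (s + L)

theorem frontier_unroll_subset [TopologicalSpace Y] (hA : IsClosed A) (s : ℝ) :
    frontier (unroll s A) ⊆ circleLift (frontier A) ∩ WithLp.fst ⁻¹' Set.Ico s (s + L) ∪
      (circleLift A ∩ WithLp.fst ⁻¹' {s} ∪ circleLift A ∩ WithLp.fst ⁻¹' {s + L}) := by
  have hfst : Continuous (WithLp.fst : WithLp 2 (ℝ × Y) → ℝ) := WithLp.continuous_fst 2 ℝ Y
  have hlift : IsClosed (circleLift A) :=
    hA.preimage (continuous_baseMap (AddCircle.continuous_mk' L))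
  intro p hp
  have hpA : p ∈ circleLift A := closure_minimal Set.inter_subset_left hlift hp.1
  obtain ⟨hs, hsL⟩ : p ∈ WithLp.fst ⁻¹' Set.Icc s (s + L) :=
    closure_minimal (Set.inter_subset_right.trans (Set.preimage_mono Set.Ioo_subset_Icc_self))
      (isClosed_Icc.preimage hfst) hp.1
  rcases hs.eq_or_lt with hs | hs
  · exact Or.inr (Or.inl ⟨hpA, hs.symm⟩)
  rcases hsL.eq_or_lt with hsL | hsL
  · exact Or.inr (Or.inr ⟨hpA, hsL⟩)
  refine Or.inl ⟨?_, hs.le, hsL⟩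
  rw [circleLift_frontier, hlift.frontier_eq]
  exact ⟨hpA, fun hpi => hp.2 (interior_inter.ge ⟨hpi, (isOpen_Ioo.preimage hfst).interior_eq.ge
    ⟨hs, hsL⟩⟩)⟩

variable [EMetricSpace Y]
  [MeasurableSpace (WithLp 2 (ℝ × Y))] [BorelSpace (WithLp 2 (ℝ × Y))]
  [MeasurableSpace (WithLp 2 (AddCircle L × Y))] [BorelSpace (WithLp 2 (AddCircle L × Y))]

theorem baseMeasure_circleLift_singleton (hL : 0 < L) {d : ℝ} (hd : 0 ≤ d)
    (A : Set (WithLp 2 (AddCircle L × Y))) (s : ℝ) :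
    baseMeasure d (circleLift A) {s} = baseMeasure d A {(s : AddCircle L)} := by
  rw [baseMeasure_circleLift hL hd A (measurableSet_singleton s) (Set.injOn_singleton _ _)
    (Set.singleton_subset_iff.2 (Set.left_mem_Icc.2 (by linarith))), Set.image_singleton]

theorem hausdorffMeasure_unroll (hL : 0 < L) {d : ℝ} (hd : 0 ≤ d) {s : ℝ}
    (hs : baseMeasure d A {(s : AddCircle L)} = 0) : μH[d] (unroll s A) = μH[d] A := by
  rw [← baseMeasure_circleLift_singleton hL hd] at hs
  rw [← baseMeasure_circleLift_Ico hL hd A s, ← measure_congr (Ioo_ae_eq_Ico' hs),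
    baseMeasure_apply _ _ measurableSet_Ioo, unroll]

theorem hausdorffMeasure_frontier_unroll_le (hL : 0 < L) (hA : IsClosed A) {d : ℝ} (hd : 0 ≤ d)
    (s : ℝ) : μH[d] (frontier (unroll s A)) ≤
      μH[d] (frontier A) + 2 * baseMeasure d A {(s : AddCircle L)} := by
  have hsL : baseMeasure d (circleLift A) {s + L} = baseMeasure d A {(s : AddCircle L)} := by
    rw [baseMeasure_circleLift_singleton hL hd, AddCircle.coe_add_period]
  rw [two_mul]
  nth_rw 2 [← hsL]
  rw [← baseMeasure_circleLift_singleton hL hd, ← baseMeasure_circleLift_Ico hL hd (frontier A) s,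
    baseMeasure_apply _ _ measurableSet_Ico, baseMeasure_apply _ _ (measurableSet_singleton _),
    baseMeasure_apply _ _ (measurableSet_singleton _)]
  exact (measure_mono (frontier_unroll_subset hA s)).trans
    ((measure_union_le _ _).trans (add_le_add_right (measure_union_le _ _) _))

end Cut

/-- Exchange of the first two factors of a triple product. -/
def prodLeftComm (A B C : Type*) [MetricSpace A] [MetricSpace B] [MetricSpace C] :
    WithLp 2 (A × WithLp 2 (B × C)) ≃ᵢ WithLp 2 (B × WithLp 2 (A × C)) :=
  ((IsometryEquiv.withLpProdAssoc 2 A B C).symm.trans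
    (IsometryEquiv.withLpProdCongr 2 (IsometryEquiv.withLpProdComm 2 A B)
      (IsometryEquiv.refl C))).trans (IsometryEquiv.withLpProdAssoc 2 B A C)

/-- The splitting of a line factor off the Euclidean factor of `S¹_r × ℝⁿ⁺¹`. -/
def splitLine (r : ℝ) (n : ℕ) : S1R r (n + 1) ≃ᵢ WithLp 2 (ℝ × S1R r n) :=
  (IsometryEquiv.withLpProdCongr 2 (IsometryEquiv.refl (Circ r))
    ((stdOrthonormalBasis ℝ (WithLp 2 (ℝ × EucSp n))).reindex
      (finCongr (by rw [finrank_withLp_prod, finrank_euclideanSpace_fin]))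
        ).repr.symm.toIsometryEquiv).trans
    (prodLeftComm (Circ r) ℝ (EucSp n))

theorem isoProfile_le_frontier_add_two_mul_iInf {L r : ℝ} (hL : 0 < L) {n : ℕ}
    {A : Set (WithLp 2 (AddCircle L × S1R r n))} (hA : IsClosed A) :
    isoProfile (S1R r (n + 1)) (n + 2) (μH[(n + 2 : ℕ)] A) ≤
      μH[(n + 1 : ℕ)] (frontier A) + 2 * ⨅ t, baseMeasure (n + 1 : ℕ) A {t} := by
  rw [ENNReal.mul_iInf_of_ne two_ne_zero (by finiteness), ENNReal.add_iInf]
  refine le_iInf fun t => ?_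
  obtain ⟨s, rfl⟩ := QuotientAddGroup.mk_surjective t
  rcases eq_or_ne (baseMeasure (n + 1 : ℕ) A {(s : AddCircle L)}) ∞ with htop | hfin
  · rw [htop, ENNReal.mul_top two_ne_zero, add_top]
    exact le_top
  have hnull : baseMeasure (n + 2 : ℕ) A {(s : AddCircle L)} = 0 := by
    rw [baseMeasure_apply _ _ (measurableSet_singleton _)] at hfin ⊢
    exact hausdorffMeasure_eq_zero_of_ne_top (by exact_mod_cast Nat.lt_succ_self _) hfin
  rw [← hausdorffMeasure_unroll hL (by positivity) hnull]
  exact (isoProfile_le_frontier_of_isometryEquiv (splitLine r n) (n + 1) (unroll s A)).trans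
    (hausdorffMeasure_frontier_unroll_le hL hA (by positivity) s)

section Torus

variable {r1 r2 : ℝ} {n : ℕ} {Ω : Set (T2R r1 r2 n)}

theorem isoProfile_le_frontier_add_two_mul_thetaMin (hr1 : 0 < r1) (hΩ : IsClosed Ω) :
    isoProfile (S1R r2 (n + 1)) (n + 2) (haus (T2R r1 r2 n) (n + 2) Ω) ≤
      haus (T2R r1 r2 n) (n + 1) (frontier Ω) + 2 * thetaMin Ω := by
  have hslice (t : Circ r1) : sliceF1 Ω t = baseMeasure (n + 1 : ℕ) Ω {t} := by
    rw [sliceF1, haus_eq_hausdorffMeasure, baseMeasure_apply _ _ (measurableSet_singleton t)]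
    rfl
  simp only [haus_eq_hausdorffMeasure, thetaMin, hslice]
  exact isoProfile_le_frontier_add_two_mul_iInf (by positivity) hΩ

theorem isoProfile_le_frontier_add_two_mul_sigmaMin (hr2 : 0 < r2) (hΩ : IsClosed Ω) :
    isoProfile (S1R r1 (n + 1)) (n + 2) (haus (T2R r1 r2 n) (n + 2) Ω) ≤
      haus (T2R r1 r2 n) (n + 1) (frontier Ω) + 2 * sigmaMin Ω := by
  let e := prodLeftComm (Circ r2) (Circ r1) (EucSp n)
  have hslice (t : Circ r2) : sliceF2 Ω t = baseMeasure (n + 1 : ℕ) (e ⁻¹' Ω) {t} := by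
    rw [sliceF2, haus_eq_hausdorffMeasure, baseMeasure_apply _ _ (measurableSet_singleton t),
      ← e.hausdorffMeasure_preimage]
    rfl
  have hfr : frontier (e ⁻¹' Ω) = e ⁻¹' frontier Ω := (e.toHomeomorph.preimage_frontier Ω).symm
  simp only [haus_eq_hausdorffMeasure, sigmaMin, hslice]
  rw [← e.hausdorffMeasure_preimage _ Ω, ← e.hausdorffMeasure_preimage _ (frontier Ω), ← hfr]
  exact isoProfile_le_frontier_add_two_mul_iInf (by positivity) (hΩ.preimage e.continuous)

end Torus

theorem slice_min_zero_general {r1 r2 : ℝ} (hr1 : 0 < r1) (hr12 : r1 ≤ r2) {n : ℕ}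
    {Ω : Set (T2R r1 r2 n)} (hΩ : IsClosed Ω) (h : thetaMin Ω = 0 ∨ sigmaMin Ω = 0) :
    isoProfile (S1R r1 (n + 1)) (n + 2) (haus (T2R r1 r2 n) (n + 2) Ω) ≤
      haus (T2R r1 r2 n) (n + 1) (frontier Ω) := by
  rcases h with hθ | hσ
  · have hcut := isoProfile_le_frontier_add_two_mul_thetaMin hr1 hΩ
    rw [hθ, mul_zero, add_zero] at hcut
    exact (isoProfile_le_isoProfile_of_radius_le hr1 hr12 n.succ_ne_zero _).trans hcut
  · have hcut := isoProfile_le_frontier_add_two_mul_sigmaMin (hr1.trans_le hr12) hΩ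
    rwa [hσ, mul_zero, add_zero] at hcut

/-- Lemma 1 of the paper.
Let `0 < r1 ≤ r2`, `2 ≤ n ≤ 5`, and let `Ω` be an isoperimetric region in
`S¹_{r1} × S¹_{r2} × ℝⁿ`.  If `θ_m = 0` or `σ_m = 0`, then
`I_{S¹_{r1}×ℝ^{n+1}}(V^{n+2}(Ω)) ≤ V^{n+1}(∂Ω)`. -/
theorem slice_min_zero (r1 r2 : ℝ) (hr1 : 0 < r1) (hr12 : r1 ≤ r2)
    (n : ℕ) (hn2 : 2 ≤ n) (hn5 : n ≤ 5)
    (Ω : Set (T2R r1 r2 n)) (hΩ : IsIsoRegion (T2R r1 r2 n) (n+2) Ω)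
    (h : thetaMin Ω = 0 ∨ sigmaMin Ω = 0) :
    isoProfile (S1R r1 (n+1)) (n+2) (haus (T2R r1 r2 n) (n+2) Ω)
      ≤ haus (T2R r1 r2 n) (n+1) (frontier Ω) := by
  obtain ⟨⟨U, -, rfl⟩, -⟩ := hΩ
  exact slice_min_zero_general hr1 hr12 isClosed_closure h

end
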